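/- arXiv:2602.19646 — 2 statements merged into one kernel-verified Lean document; each statement's English description precedes it below -/
import Mathlib

section
/- Let F be a non-archimedean local field of odd residue characteristic with unramified additive character ψ, and let a, b ∈ F with v(a) ≤ min{0, v(b)}. Then for every integer m with m < −v(3), the integral of ψ(a t³ + b t) over the annulus 𝔭^m \ 𝔭^{m+1} vanishes: ∫_{t ∈ 𝔭^m \ 𝔭^{m+1}} ψ(a t³ + b t) dt = 0. -/
open MeasureTheory

namespace AiryVanishing

section MeasureTheory

/-- Vanishing of a set integral may be checked after enlarging the σ-algebra to the Carathéodory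
σ-algebra of the measure. The set `A` need not be measurable. -/
theorem setIntegral_eq_zero_of_caratheodory {α : Type*} [m : MeasurableSpace α] (μ : Measure α)
    (A : Set α) (f : α → ℂ)
    (h : @integral α ℂ _ _ μ.toOuterMeasure.caratheodory
      ((@OuterMeasure.toMeasure α μ.toOuterMeasure.caratheodory μ.toOuterMeasure le_rfl).restrict A)
      f = 0) :
    ∫ t in A, f t ∂μ = 0 := by
  by_cases hf : AEStronglyMeasurable f (μ.restrict A)
  swap
  · exact integral_non_aestronglyMeasurable hf
  have hm : m ≤ μ.toOuterMeasure.caratheodory := le_toOuterMeasure_caratheodory μ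
  set μ' := @OuterMeasure.toMeasure α μ.toOuterMeasure.caratheodory μ.toOuterMeasure le_rfl
  have hle : ∀ s : Set α, μ s ≤ μ' s := fun s ↦
    @le_toMeasure_apply α μ.toOuterMeasure.caratheodory μ.toOuterMeasure le_rfl s
  have heq : ∀ s : Set α, μ' s = μ s := by
    intro s
    refine le_antisymm ?_ (hle s)
    calc μ' s ≤ μ' (toMeasurable μ s) := measure_mono (subset_toMeasurable μ s)
      _ = μ (toMeasurable μ s) :=
        @toMeasure_apply α μ.toOuterMeasure.caratheodory μ.toOuterMeasure le_rfl _
          (hm _ (measurableSet_toMeasurable μ s))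
      _ = μ s := measure_toMeasurable s
  have htrim : (μ'.restrict A).trim hm = μ.restrict A := by
    refine @Measure.ext _ m _ _ (fun t ht ↦ ?_)
    rw [trim_measurableSet_eq hm ht, Measure.restrict_apply ht,
      @Measure.restrict_apply _ μ.toOuterMeasure.caratheodory _ _ _ (hm _ ht), heq]
  have hae : f =ᵐ[μ'.restrict A] hf.mk f := by
    refine ae_eq_of_ae_eq_trim (hm := hm) ?_
    rw [htrim]
    exact hf.ae_eq_mk
  have hint := integral_trim (μ := μ'.restrict A) hm hf.stronglyMeasurable_mk
  rw [htrim, ← integral_congr_ae hae, h] at hint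
  rw [integral_congr_ae hf.ae_eq_mk, ← hint]

/-- A null-measurable property holding on `S` holds almost everywhere for the restriction to `S`,
whether or not `S` is measurable. -/
theorem ae_restrict_of_forall {α : Type*} [MeasurableSpace α] {μ : Measure α} {S : Set α}
    {p : α → Prop} (hp : NullMeasurableSet {t | p t} (μ.restrict S)) (h : ∀ t ∈ S, p t) :
    ∀ᵐ t ∂μ.restrict S, p t :=
  (ae_restrict_iff₀ hp).2 (.of_forall h)

theorem measurableAdd_caratheodory {G : Type*} [AddCommGroup G] (ρ : OuterMeasure G)
    (hρ : ∀ (c : G) (s : Set G), ρ ((c + ·) ⁻¹' s) = ρ s) :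
    @MeasurableAdd G ρ.caratheodory _ := by
  let _ : MeasurableSpace G := ρ.caratheodory
  have hmeas : ∀ c : G, Measurable (c + ·) := by
    intro c s hs
    refine ρ.isCaratheodory_iff.2 fun t ↦ ?_
    have hcancel : (c + ·) ⁻¹' ((-c + ·) ⁻¹' t) = t := by
      ext x
      simp
    have h := ρ.isCaratheodory_iff.1 hs ((-c + ·) ⁻¹' t)
    rwa [← hρ c ((-c + ·) ⁻¹' t), ← hρ c ((-c + ·) ⁻¹' t ∩ s), ← hρ c ((-c + ·) ⁻¹' t \ s),
      Set.preimage_inter, Set.preimage_sdiff, hcancel] at h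
  exact ⟨hmeas, fun c ↦ by simpa only [add_comm _ c] using hmeas c⟩

theorem isAddLeftInvariant_toMeasure_caratheodory {G : Type*} [AddCommGroup G]
    (ρ : OuterMeasure G) (hρ : ∀ (c : G) (s : Set G), ρ ((c + ·) ⁻¹' s) = ρ s) :
    @Measure.IsAddLeftInvariant G ρ.caratheodory _
      (@OuterMeasure.toMeasure G ρ.caratheodory ρ le_rfl) := by
  let _ : MeasurableSpace G := ρ.caratheodory
  have := measurableAdd_caratheodory ρ hρ
  refine ⟨fun c ↦ Measure.ext fun s hs ↦ ?_⟩
  rw [Measure.map_apply (measurable_const_add c) hs, toMeasure_apply _ _ hs,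
    toMeasure_apply _ _ (measurable_const_add c hs), hρ]

variable {G : Type*} [AddCommGroup G] [MeasurableSpace G] [MeasurableAdd G]

theorem measurePreserving_restrict_of_mem_iff {μ : Measure G} [μ.IsAddLeftInvariant] {S : Set G}
    {h : G} (hS : ∀ t, h + t ∈ S ↔ t ∈ S) :
    MeasurePreserving (h + ·) (μ.restrict S) (μ.restrict S) := by
  have hp : (h + ·) ⁻¹' S = S := Set.ext hS
  simpa only [hp] using
    (measurePreserving_add_left μ h).restrict_preimage_emb (measurableEmbedding_addLeft h) S

/-- If translating `f` by `h` multiplies it by a translation invariant factor `χ`, the integral of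
`f` vanishes over every invariant set on which `χ` stays away from `1`. -/
theorem setIntegral_eq_zero_of_translate {ν : Measure G} {f χ : G → ℂ} {h : G} {D : Set G} {ε : ℝ}
    (hε : 0 < ε) (hχ : AEStronglyMeasurable χ ν) (hh : MeasurePreserving (h + ·) ν ν)
    (hf : Integrable f ν) (hfχ : ∀ᵐ t ∂ν, f (h + t) = χ t * f t)
    (hχh : ∀ᵐ t ∂ν, χ (h + t) = χ t) (hD : NullMeasurableSet D ν)
    (hDh : ∀ᵐ t ∂ν, h + t ∈ D ↔ t ∈ D) (hDε : ∀ t ∈ D, ε ≤ ‖χ t - 1‖) :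
    ∫ t in D, f t ∂ν = 0 := by
  set g : G → ℂ := D.indicator fun t ↦ (χ t - 1)⁻¹ with hg
  have hgm : AEStronglyMeasurable g ν :=
    ((hχ.sub aestronglyMeasurable_const).aemeasurable.inv.aestronglyMeasurable).indicator₀ hD
  have hgb : ∀ t, ‖g t‖ ≤ ε⁻¹ := by
    intro t
    by_cases ht : t ∈ D
    · rw [hg, Set.indicator_of_mem ht, norm_inv]
      exact inv_anti₀ hε (hDε t ht)
    · rw [hg, Set.indicator_of_notMem ht, norm_zero]
      positivity
  have hgf : Integrable (fun t ↦ g t * f t) ν := hf.bdd_mul hgm (.of_forall hgb)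
  have hshift : ∀ᵐ t ∂ν, g (h + t) * f (h + t) = g t * f t + D.indicator f t := by
    filter_upwards [hfχ, hχh, hDh] with t h1 h2 h3
    by_cases ht : t ∈ D
    · have hne : χ t - 1 ≠ 0 := norm_pos_iff.mp (hε.trans_le (hDε t ht))
      rw [hg, Set.indicator_of_mem ht, Set.indicator_of_mem (h3.2 ht), Set.indicator_of_mem ht,
        h1, h2]
      field_simp
      ring
    · rw [hg, Set.indicator_of_notMem ht, Set.indicator_of_notMem (mt h3.1 ht),
        Set.indicator_of_notMem ht]
      ring
  have hint : ∫ t, g t * f t ∂ν = ∫ t, g t * f t ∂ν + ∫ t in D, f t ∂ν := by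
    calc ∫ t, g t * f t ∂ν = ∫ t, g (h + t) * f (h + t) ∂ν :=
          (hh.integral_comp (measurableEmbedding_addLeft h) fun t ↦ g t * f t).symm
      _ = ∫ t, (g t * f t + D.indicator f t) ∂ν := integral_congr_ae hshift
      _ = _ := by rw [integral_add hgf (hf.indicator₀ hD), integral_indicator₀ hD]
  simpa using hint

/-- If countably many translations multiply `f` by invariant factors, and almost every point sees a
factor other than `1`, then the integral of `f` vanishes. -/
theorem integral_eq_zero_of_translates {ν : Measure G} {ι : Type*} [Countable ι] [Nonempty ι]
    {f : G → ℂ} {χ : ι → G → ℂ} {H : ι → G} (hχ : ∀ i, AEStronglyMeasurable (χ i) ν)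
    (hH : ∀ i, MeasurePreserving (H i + ·) ν ν) (hf : Integrable f ν)
    (hfχ : ∀ i, ∀ᵐ t ∂ν, f (H i + t) = χ i t * f t)
    (hχH : ∀ i j, ∀ᵐ t ∂ν, χ i (H j + t) = χ i t)
    (hcov : ∀ᵐ t ∂ν, ∃ i, χ i t ≠ 1) :
    ∫ t, f t ∂ν = 0 := by
  obtain ⟨e, he⟩ := exists_surjective_nat (ι × ℕ)
  set S : ℕ → Set G := fun n ↦ {t | 1 / ((e n).2 + 1 : ℝ) < ‖χ (e n).1 t - 1‖} with hS
  set D : ℕ → Set G := fun n ↦ S n ∩ ⋂ i ∈ Set.Iio n, (S i)ᶜ with hDdef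
  have hSm : ∀ n, NullMeasurableSet (S n) ν := fun n ↦
    aestronglyMeasurable_const.nullMeasurableSet_lt ((hχ _).sub aestronglyMeasurable_const).norm
  have hDm : ∀ n, NullMeasurableSet (D n) ν := fun n ↦
    (hSm n).inter (.biInter (Set.to_countable _) fun i _ ↦ (hSm i).compl)
  have hDd : Pairwise (Function.onFun Disjoint D) := by
    refine (pairwise_disjoint_on D).2 fun i j hij ↦ Set.disjoint_left.2 fun t hi hj ↦ ?_
    exact Set.mem_iInter₂.1 hj.2 i hij hi.1
  have hD0 : ∀ n, ∫ t in D n, f t ∂ν = 0 := by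
    intro n
    have hinv : ∀ᵐ t ∂ν, ∀ i, χ i (H (e n).1 + t) = χ i t := ae_all_iff.2 fun i ↦ hχH i _
    refine setIntegral_eq_zero_of_translate (h := H (e n).1) (ε := 1 / ((e n).2 + 1 : ℝ))
      (by positivity) (hχ _) (hH _) hf (hfχ _) (hχH _ _) (hDm n) ?_ fun t ht ↦ ht.1.le
    filter_upwards [hinv] with t ht
    simp [hDdef, hS, ht]
  have hU : (⋃ n, D n : Set G) =ᵐ[ν] Set.univ := by
    refine Filter.eventuallyEq_univ.2 ?_
    filter_upwards [hcov] with t ⟨i, hi⟩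
    obtain ⟨k, hk⟩ := exists_nat_one_div_lt (norm_pos_iff.2 (sub_ne_zero.2 hi))
    obtain ⟨n, hn⟩ := he (i, k)
    have hex : ∃ n, t ∈ S n := ⟨n, by simpa [hS, hn] using hk⟩
    classical
    exact Set.mem_iUnion.2 ⟨Nat.find hex, Nat.find_spec hex,
      Set.mem_iInter₂.2 fun i hi ↦ Nat.find_min hex hi⟩
  rw [← setIntegral_univ, ← setIntegral_congr_set hU,
    integral_iUnion_ae hDm (fun i j hij ↦ (hDd hij).aedisjoint) hf.integrableOn]
  simp [hD0]

/-- A set of positive finite measure meets one of its translates by differences of an infinite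
sequence in positive measure. -/
theorem exists_measure_inter_translate_ne_zero {ν : Measure G} [IsFiniteMeasure ν] {d : ℕ → G}
    (hd : ∀ i, MeasurePreserving (d i + ·) ν ν) {M : Set G} (hM : NullMeasurableSet M ν)
    (hM0 : ν M ≠ 0) :
    ∃ i j, i ≠ j ∧ ν (M ∩ ((d i - d j) + ·) ⁻¹' M) ≠ 0 := by
  by_contra! hcon
  have hmeas : ∀ i, NullMeasurableSet ((d i + ·) ⁻¹' M) ν := fun i ↦
    hM.preimage (hd i).quasiMeasurePreserving
  have hdisj : Pairwise (Function.onFun (AEDisjoint ν) fun i ↦ (d i + ·) ⁻¹' M) := by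
    intro i j hij
    have h := (hd j).measure_preimage_emb (measurableEmbedding_addLeft (d j))
      (M ∩ ((d i - d j) + ·) ⁻¹' M)
    rw [hcon i j hij] at h
    rw [Function.onFun, AEDisjoint, ← h]
    congr 1
    ext t
    have : d i - d j + (d j + t) = d i + t := by abel
    simp [this, and_comm]
  have htop := measure_iUnion₀ hdisj hmeas
  simp_rw [fun i ↦ (hd i).measure_preimage hM] at htop
  rw [ENNReal.tsum_const_eq_top_of_ne_zero hM0] at htop
  exact measure_ne_top ν _ htop

end MeasureTheory

/-- Either countably many elements of `S` represent it modulo `P`, or `S` contains a sequence of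
elements pairwise incongruent modulo `P`. -/
theorem exists_seq_representatives_or_incongruent {G : Type*} [AddCommGroup G] (P : AddSubgroup G)
    {S : Set G} (hS : S.Nonempty) :
    (∃ r : ℕ → G, (∀ i, r i ∈ S) ∧ ∀ x ∈ S, ∃ i, x - r i ∈ P) ∨
      ∃ c : ℕ → G, (∀ i, c i ∈ S) ∧ ∀ i j, i ≠ j → c i - c j ∉ P := by
  set Q : Set (G ⧸ P) := QuotientAddGroup.mk '' S
  have hrep : ∀ z : Q, ∃ x ∈ S, (x : G ⧸ P) = z := fun z ↦ z.2
  choose x hxS hxz using hrep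
  rcases Q.finite_or_infinite with hfin | hinf
  · left
    have : Finite Q := hfin
    have : Nonempty Q := (hS.image _).to_subtype
    obtain ⟨e, he⟩ := exists_surjective_nat Q
    refine ⟨fun i ↦ x (e i), fun i ↦ hxS _, fun y hy ↦ ?_⟩
    obtain ⟨i, hi⟩ := he ⟨y, y, hy, rfl⟩
    refine ⟨i, ?_⟩
    rw [← QuotientAddGroup.eq_zero_iff, QuotientAddGroup.mk_sub, hxz, hi, sub_self]
  · right
    have : Infinite Q := hinf.to_subtype
    refine ⟨fun i ↦ x (Infinite.natEmbedding Q i), fun i ↦ hxS _, fun i j hij hmem ↦ hij ?_⟩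
    rw [← QuotientAddGroup.eq_zero_iff, QuotientAddGroup.mk_sub, hxz, hxz, sub_eq_zero] at hmem
    exact (Infinite.natEmbedding Q).injective (Subtype.ext hmem)

/-- `v` restricts to an integer valued valuation on the nonzero elements of `F`. -/
structure IsVal {F : Type*} [Field F] (v : F → ℤ) : Prop where
  map_mul : ∀ x y : F, x ≠ 0 → y ≠ 0 → v (x * y) = v x + v y
  map_add : ∀ x y : F, x ≠ 0 → y ≠ 0 → x + y ≠ 0 → min (v x) (v y) ≤ v (x + y)

namespace IsVal

variable {F : Type*} [Field F] {v : F → ℤ} (hv : IsVal v)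

include hv

theorem map_one : v 1 = 0 := by
  have h := hv.map_mul 1 1 one_ne_zero one_ne_zero
  rw [mul_one] at h
  lia

theorem map_neg (x : F) : v (-x) = v x := by
  rcases eq_or_ne x 0 with rfl | hx
  · rw [neg_zero]
  have h1 : v (-1) = 0 := by
    have h := hv.map_mul (-1) (-1) (by simp) (by simp)
    rw [neg_mul_neg, one_mul, hv.map_one] at h
    lia
  rw [← neg_one_mul, hv.map_mul _ _ (by simp) hx, h1, zero_add]

theorem map_div {x y : F} (hx : x ≠ 0) (hy : y ≠ 0) : v (x / y) = v x - v y := by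
  have h := hv.map_mul (x / y) y (div_ne_zero hx hy) hy
  rw [div_mul_cancel₀ x hy] at h
  lia

theorem map_pow {x : F} (hx : x ≠ 0) (n : ℕ) : v (x ^ n) = n * v x := by
  induction n with
  | zero => simp [hv.map_one]
  | succ n ih =>
    rw [pow_succ, hv.map_mul _ _ (pow_ne_zero n hx) hx, ih]
    push_cast
    ring

theorem exists_eq {x : F} (hx : x ≠ 0) (hx1 : v x = -1) (n : ℤ) : ∃ y : F, y ≠ 0 ∧ v y = n := by
  rcases le_total 0 n with hn | hn
  · refine ⟨1 / x ^ n.toNat, by simp [hx], ?_⟩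
    rw [hv.map_div one_ne_zero (pow_ne_zero _ hx), hv.map_one, hv.map_pow hx, hx1]
    lia
  · refine ⟨x ^ (-n).toNat, pow_ne_zero _ hx, ?_⟩
    rw [hv.map_pow hx, hx1]
    lia

omit hv in
/-- The fractional ideal of elements of valuation at least `n`. -/
def ball (hv : IsVal v) (n : ℤ) : AddSubgroup F where
  carrier := {x | x = 0 ∨ n ≤ v x}
  zero_mem' := Or.inl rfl
  neg_mem' := by
    rintro x (rfl | hx)
    · exact Or.inl neg_zero
    · exact Or.inr (by rwa [hv.map_neg])
  add_mem' := by
    rintro x y hx hy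
    by_cases hx0 : x = 0
    · simpa [hx0] using hy
    by_cases hy0 : y = 0
    · simpa [hy0] using hx
    by_cases hxy : x + y = 0
    · exact Or.inl hxy
    · exact Or.inr ((le_min (hx.resolve_left hx0) (hy.resolve_left hy0)).trans
        (hv.map_add x y hx0 hy0 hxy))

theorem mem_ball {n : ℤ} {x : F} : x ∈ hv.ball n ↔ x = 0 ∨ n ≤ v x := Iff.rfl

theorem mem_ball_of_le {n : ℤ} {x : F} (h : n ≤ v x) : x ∈ hv.ball n := Or.inr h

theorem ball_anti {i j : ℤ} (hij : i ≤ j) : hv.ball j ≤ hv.ball i :=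
  fun _ hx ↦ hx.imp_right hij.trans

theorem mul_mem_ball {i j : ℤ} {x y : F} (hx : x ∈ hv.ball i) (hy : y ∈ hv.ball j) :
    x * y ∈ hv.ball (i + j) := by
  by_cases hx0 : x = 0
  · exact Or.inl (by rw [hx0, zero_mul])
  by_cases hy0 : y = 0
  · exact Or.inl (by rw [hy0, mul_zero])
  refine Or.inr ?_
  rw [hv.map_mul x y hx0 hy0]
  exact add_le_add (hx.resolve_left hx0) (hy.resolve_left hy0)

theorem mem_ball_and_notMem_iff {n : ℤ} {x : F} :
    x ∈ hv.ball n ∧ x ∉ hv.ball (n + 1) ↔ x ≠ 0 ∧ v x = n := by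
  simp only [hv.mem_ball, not_or, not_le]
  constructor
  · rintro ⟨h1, h2, h3⟩
    exact ⟨h2, le_antisymm (by lia) (h1.resolve_left h2)⟩
  · rintro ⟨h1, h2⟩
    exact ⟨Or.inr h2.ge, h1, by lia⟩

theorem add_of_mem_ball {x y : F} (hx : x ≠ 0) (hy : y ∈ hv.ball (v x + 1)) :
    x + y ≠ 0 ∧ v (x + y) = v x := by
  obtain ⟨h1, h2⟩ := (hv.mem_ball_and_notMem_iff (n := v x)).2 ⟨hx, rfl⟩
  refine hv.mem_ball_and_notMem_iff.1 ⟨add_mem h1 (hv.ball_anti (by lia) hy), fun h ↦ h2 ?_⟩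
  exact (AddSubgroup.add_mem_cancel_right _ hy).1 h

end IsVal

/-- The standing assumptions on the valuation `v`, the unramified additive character `ψ`, the
coefficients `a`, `b` and the level `m`. -/
structure IsAiryPhase {F : Type*} [Field F] (v : F → ℤ) (ψ : F → ℂ) (a b : F) (m : ℤ) : Prop
    extends IsVal v where
  map_two : v 2 = 0
  char_add : ∀ x y : F, ψ (x + y) = ψ x * ψ y
  char_triv : ∀ x : F, (x = 0 ∨ 0 ≤ v x) → ψ x = 1
  char_nontriv : ∃ x : F, x ≠ 0 ∧ v x = -1 ∧ ψ x ≠ 1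
  lead_ne_zero : a ≠ 0
  map_lead_le : v a ≤ 0
  map_lead_le_map : b = 0 ∨ v a ≤ v b
  level_lt : m < -(v 3)

/-- The oscillating function `t ↦ ψ (a t³ + b t)`. -/
def airy {F : Type*} [Field F] (ψ : F → ℂ) (a b t : F) : ℂ := ψ (a * t ^ 3 + b * t)

namespace IsAiryPhase

variable {F : Type*} [Field F] {v : F → ℤ} {ψ : F → ℂ} {a b : F} {m : ℤ}
  (hA : IsAiryPhase v ψ a b m)

include hA

theorem char_ne_zero (x : F) : ψ x ≠ 0 := by
  intro h
  have h1 := hA.char_add x (-x)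
  rw [h, zero_mul, add_neg_cancel, hA.char_triv 0 (Or.inl rfl)] at h1
  exact one_ne_zero h1

theorem airy_ne_zero (t : F) : airy ψ a b t ≠ 0 := hA.char_ne_zero _

theorem char_add_eq {x y : F} (hy : y ∈ hA.ball 0) : ψ (x + y) = ψ x := by
  rw [hA.char_add, hA.char_triv y hy, mul_one]

/-- Second differences of the linearised phase are constant, so it cannot be trivial at all four
corners of a parallelogram. -/
theorem char_six_eq_one {t δ δ' h : F}
    (h00 : ψ ((3 * a * t ^ 2 + b) * h) = 1) (h10 : ψ ((3 * a * (δ + t) ^ 2 + b) * h) = 1)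
    (h01 : ψ ((3 * a * (δ' + t) ^ 2 + b) * h) = 1)
    (h11 : ψ ((3 * a * (δ + (δ' + t)) ^ 2 + b) * h) = 1) :
    ψ (6 * a * δ * δ' * h) = 1 := by
  have heq : 6 * a * δ * δ' * h + ((3 * a * (δ + t) ^ 2 + b) * h + (3 * a * (δ' + t) ^ 2 + b) * h)
      = (3 * a * t ^ 2 + b) * h + (3 * a * (δ + (δ' + t)) ^ 2 + b) * h := by ring
  have hψ := congrArg ψ heq
  simpa only [hA.char_add, h00, h10, h01, h11, mul_one] using hψ

variable [CharZero F]

theorem map_three_nonneg : 0 ≤ v 3 := by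
  have h := hA.map_add 1 2 one_ne_zero two_ne_zero (by norm_num)
  rw [hA.map_one, hA.map_two, min_self] at h
  norm_num at h
  exact h

omit [CharZero F] in
theorem three_mul_lead_mem (x : F) {n : ℤ} (hx : x ∈ hA.ball n) :
    3 * a * x ∈ hA.ball (v 3 + v a + n) :=
  hA.mul_mem_ball (hA.mul_mem_ball (hA.mem_ball_of_le le_rfl) (hA.mem_ball_of_le le_rfl)) hx

/-- Translating by a small element multiplies `airy` by the character of the linearised phase. -/
theorem airy_add {t h : F} (ht : t ∈ hA.ball m) (hh : h ∈ hA.ball (-1 - (v 3 + v a + 2 * m))) :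
    airy ψ a b (h + t) = ψ ((3 * a * t ^ 2 + b) * h) * airy ψ a b t := by
  have h3 := hA.map_three_nonneg
  have hm := hA.level_lt
  have ha := hA.map_lead_le
  have hquad : 3 * a * (t * (h * h)) ∈ hA.ball 0 :=
    hA.ball_anti (by lia) (hA.three_mul_lead_mem _
      (hA.mul_mem_ball ht (hA.mul_mem_ball hh hh)))
  have hcub : a * (h * (h * h)) ∈ hA.ball 0 :=
    hA.ball_anti (by lia) (hA.mul_mem_ball (hA.mem_ball_of_le (le_refl (v a)))
      (hA.mul_mem_ball hh (hA.mul_mem_ball hh hh)))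
  rw [airy, airy, ← hA.char_add,
    ← hA.char_add_eq (x := (3 * a * t ^ 2 + b) * h + _) (add_mem hquad hcub)]
  congr 1
  ring

/-- The character of the linearised phase does not change under small translations. -/
theorem char_linear_add {t h h' : F} (ht : t ∈ hA.ball m)
    (hh : h ∈ hA.ball (-1 - (v 3 + v a + 2 * m)))
    (hh' : h' ∈ hA.ball (-1 - (v 3 + v a + 2 * m))) :
    ψ ((3 * a * (h' + t) ^ 2 + b) * h) = ψ ((3 * a * t ^ 2 + b) * h) := by
  have h3 := hA.map_three_nonneg
  have hm := hA.level_lt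
  have ha := hA.map_lead_le
  have hcross : 3 * a * (t * (h' * h)) ∈ hA.ball 0 :=
    hA.ball_anti (by lia) (hA.three_mul_lead_mem _
      (hA.mul_mem_ball ht (hA.mul_mem_ball hh' hh)))
  have hcub : 3 * a * (h' * (h' * h)) ∈ hA.ball 0 :=
    hA.ball_anti (by lia) (hA.three_mul_lead_mem _
      (hA.mul_mem_ball hh' (hA.mul_mem_ball hh' hh)))
  rw [← hA.char_add_eq (x := (3 * a * t ^ 2 + b) * h)
    (add_mem (add_mem hcross hcross) hcub)]
  congr 1
  ring

theorem map_linear {t : F} (ht0 : t ≠ 0) (ht : v t = m) :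
    3 * a * t ^ 2 + b ≠ 0 ∧ v (3 * a * t ^ 2 + b) = v 3 + v a + 2 * m := by
  have h3 := hA.map_three_nonneg
  have hm := hA.level_lt
  have ht2 : t ^ 2 ≠ 0 := pow_ne_zero 2 ht0
  have h3a : (3 : F) * a ≠ 0 := mul_ne_zero three_ne_zero hA.lead_ne_zero
  have hval : v (3 * a * t ^ 2) = v 3 + v a + 2 * m := by
    rw [hA.map_mul _ _ h3a ht2, hA.map_mul _ _ three_ne_zero hA.lead_ne_zero, hA.map_pow ht0, ht]
    push_cast
    ring
  rw [← hval]
  exact hA.add_of_mem_ball (mul_ne_zero h3a ht2)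
    (hA.map_lead_le_map.imp_right fun h ↦ by lia)

variable [MeasurableSpace F] [MeasurableAdd F] {μ : Measure F} [μ.IsAddLeftInvariant]

omit [CharZero F] in
theorem measurePreserving_ball {d : F} (hd : d ∈ hA.ball m) :
    MeasurePreserving (d + ·) (μ.restrict (hA.ball m : Set F)) (μ.restrict (hA.ball m : Set F)) :=
  measurePreserving_restrict_of_mem_iff fun _ ↦ AddSubgroup.add_mem_cancel_left _ hd

theorem measurePreserving_annulus {h : F} (hh : h ∈ hA.ball (-1 - (v 3 + v a + 2 * m))) :
    MeasurePreserving (h + ·) (μ.restrict {t | t ≠ 0 ∧ v t = m})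
      (μ.restrict {t | t ≠ 0 ∧ v t = m}) := by
  have h3 := hA.map_three_nonneg
  have hm := hA.level_lt
  have ha := hA.map_lead_le
  have hh1 : h ∈ hA.ball (m + 1) := hA.ball_anti (by lia) hh
  have hh0 : h ∈ hA.ball m := hA.ball_anti (by lia) hh
  refine measurePreserving_restrict_of_mem_iff fun t ↦ ?_
  rw [Set.mem_ofPred_eq, Set.mem_ofPred_eq, ← hA.mem_ball_and_notMem_iff,
    ← hA.mem_ball_and_notMem_iff, AddSubgroup.add_mem_cancel_left _ hh0,
    AddSubgroup.add_mem_cancel_left _ hh1]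

/-- The integral over the annulus vanishes as soon as countably many small translations move the
value of `airy` at almost every point. -/
theorem setIntegral_airy_eq_zero_of_cover {ι : Type*} [Countable ι] [Nonempty ι] {H : ι → F}
    (hH : ∀ i, H i ∈ hA.ball (-1 - (v 3 + v a + 2 * m)))
    (hf : Integrable (airy ψ a b) (μ.restrict {t | t ≠ 0 ∧ v t = m}))
    (hcov : ∀ᵐ t ∂μ.restrict {t | t ≠ 0 ∧ v t = m},
      ∃ i, airy ψ a b (H i + t) ≠ airy ψ a b t) :
    ∫ t in {t | t ≠ 0 ∧ v t = m}, airy ψ a b t ∂μ = 0 := by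
  set ν := μ.restrict {t | t ≠ 0 ∧ v t = m}
  have hpres : ∀ i, MeasurePreserving (H i + ·) ν ν := fun i ↦ hA.measurePreserving_annulus (hH i)
  have hfi : ∀ i, AEStronglyMeasurable (fun t ↦ airy ψ a b (H i + t)) ν := fun i ↦
    hf.1.comp_measurePreserving (hpres i)
  set χ : ι → F → ℂ := fun i t ↦ airy ψ a b (H i + t) / airy ψ a b t with hχ
  have hχm : ∀ i, AEStronglyMeasurable (χ i) ν := fun i ↦
    ((hfi i).aemeasurable.div hf.1.aemeasurable).aestronglyMeasurable
  have hχeq : ∀ i, ∀ t ∈ hA.ball m, χ i t = ψ ((3 * a * t ^ 2 + b) * H i) := fun i t ht ↦ by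
    rw [hχ, div_eq_iff (hA.airy_ne_zero t), hA.airy_add ht (hH i)]
  have h3 := hA.map_three_nonneg
  have hm := hA.level_lt
  have ha := hA.map_lead_le
  refine integral_eq_zero_of_translates hχm hpres hf
    (fun i ↦ .of_forall fun t ↦ (div_mul_cancel₀ _ (hA.airy_ne_zero t)).symm) (fun i j ↦ ?_) ?_
  · refine ae_restrict_of_forall (AEStronglyMeasurable.nullMeasurableSet_eq_fun
      ((hχm i).comp_measurePreserving (hpres j)) (hχm i)) fun t ht ↦ ?_
    have htm : t ∈ hA.ball m := hA.mem_ball_of_le ht.2.ge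
    rw [hχeq i t htm,
      hχeq i _ (add_mem (hA.ball_anti (by lia) (hH j)) htm), hA.char_linear_add htm (hH i) (hH j)]
  · filter_upwards [hcov] with t ⟨i, hi⟩
    exact ⟨i, fun h ↦ hi ((div_eq_one_iff_eq (hA.airy_ne_zero t)).1 h)⟩

/-- If the residue field is represented by a sequence `r`, the integral vanishes. -/
theorem setIntegral_airy_eq_zero_of_representatives {r : ℕ → F} (hr : ∀ i, r i ∈ hA.ball 0)
    (hrep : ∀ x ∈ hA.ball 0, ∃ i, x - r i ∈ hA.ball 1)
    (hf : Integrable (airy ψ a b) (μ.restrict {t | t ≠ 0 ∧ v t = m})) :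
    ∫ t in {t | t ≠ 0 ∧ v t = m}, airy ψ a b t ∂μ = 0 := by
  obtain ⟨x, hx0, hx1, hψx⟩ := hA.char_nontriv
  obtain ⟨y, hy0, hy⟩ := hA.exists_eq hx0 hx1 (-1 - (v 3 + v a + 2 * m))
  have hH : ∀ i, y * r i ∈ hA.ball (-1 - (v 3 + v a + 2 * m)) := fun i ↦
    hA.ball_anti (by lia) (hA.mul_mem_ball (hA.mem_ball_of_le hy.ge) (hr i))
  refine hA.setIntegral_airy_eq_zero_of_cover hH hf (ae_restrict_of_forall ?_ fun t ht ↦ ?_)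
  · have : {t | ∃ i, airy ψ a b (y * r i + t) ≠ airy ψ a b t} =
        ⋃ i, {t | airy ψ a b (y * r i + t) = airy ψ a b t}ᶜ := by
      ext t
      simp
    rw [this]
    exact .iUnion fun i ↦ (AEStronglyMeasurable.nullMeasurableSet_eq_fun
      (hf.1.comp_measurePreserving (hA.measurePreserving_annulus (hH i))) hf.1).compl
  · obtain ⟨hu0, hu⟩ := hA.map_linear ht.1 ht.2
    set u := 3 * a * t ^ 2 + b
    have huy : u * y ≠ 0 := mul_ne_zero hu0 hy0
    have hmem : x / (u * y) ∈ hA.ball 0 := hA.mem_ball_of_le (by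
      rw [hA.map_div hx0 huy, hA.map_mul _ _ hu0 hy0]
      lia)
    obtain ⟨i, hi⟩ := hrep _ hmem
    refine ⟨i, fun h ↦ hψx ?_⟩
    have huyv : v (u * y) = -1 := by
      rw [hA.map_mul _ _ hu0 hy0]
      lia
    have hdiff : u * y * (x / (u * y) - r i) ∈ hA.ball 0 :=
      hA.ball_anti (by lia) (hA.mul_mem_ball (hA.mem_ball_of_le huyv.ge) hi)
    rw [hA.airy_add (hA.mem_ball_of_le ht.2.ge) (hH i)] at h
    have h1 := (mul_eq_right₀ (hA.airy_ne_zero t)).1 h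
    rw [← h1, ← hA.char_add_eq (x := u * (y * r i)) hdiff]
    congr 1
    field_simp
    ring

omit [CharZero F] in
/-- If the ball of level `m` contains infinitely many classes modulo the next ball, removing one of
these classes does not affect the measure. -/
theorem restrict_annulus_eq_restrict_ball (hμ : μ (hA.ball m : Set F) ≠ ⊤) {d : ℕ → F}
    (hd : ∀ i, d i ∈ hA.ball m) (hdd : ∀ i j, i ≠ j → d i - d j ∉ hA.ball (m + 1)) :
    μ.restrict {t | t ≠ 0 ∧ v t = m} = μ.restrict (hA.ball m : Set F) := by
  have : IsFiniteMeasure (μ.restrict (hA.ball m : Set F)) := isFiniteMeasure_restrict.2 hμ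
  set A : Set F := {t | t ≠ 0 ∧ v t = m}
  have hAB : A ⊆ hA.ball m := fun t ht ↦ hA.mem_ball_of_le ht.2.ge
  refine le_antisymm (Measure.restrict_mono hAB le_rfl) (Measure.le_iff.2 fun M hM ↦ ?_)
  set R := toMeasurable μ (M ∩ A)
  have hR : MeasurableSet (M \ R) := hM.diff (measurableSet_toMeasurable _ _)
  have hzero : μ.restrict (hA.ball m : Set F) (M \ R) = 0 := by
    by_contra hne
    obtain ⟨i, j, hij, hne'⟩ := exists_measure_inter_translate_ne_zero
      (fun i ↦ hA.measurePreserving_ball (hd i)) hR.nullMeasurableSet hne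
    rw [Measure.restrict_apply (hR.inter (measurable_const_add _ hR))] at hne'
    obtain ⟨t, ⟨ht1, ht2⟩, ht3⟩ := nonempty_of_measure_ne_zero hne'
    have hnot : ∀ s ∈ M \ R, s ∈ hA.ball m → s ∈ hA.ball (m + 1) := by
      intro s hs hsm
      by_contra hs1
      exact hs.2 (subset_toMeasurable _ _ ⟨hs.1, hA.mem_ball_and_notMem_iff.1 ⟨hsm, hs1⟩⟩)
    have hsum := hnot _ ht2 (add_mem (sub_mem (hd i) (hd j)) ht3)
    exact hdd i j hij ((AddSubgroup.add_mem_cancel_right _ (hnot t ht1 ht3)).1 hsum)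
  calc μ.restrict (hA.ball m : Set F) M
      ≤ μ.restrict (hA.ball m : Set F) (R ∪ M \ R) :=
        measure_mono (by rw [Set.union_sdiff_self]; exact Set.subset_union_right)
    _ ≤ μ.restrict (hA.ball m : Set F) R + μ.restrict (hA.ball m : Set F) (M \ R) :=
        measure_union_le _ _
    _ ≤ μ R := by
        rw [hzero, add_zero]
        exact Measure.restrict_apply_le _ _
    _ = μ.restrict A M := by rw [measure_toMeasurable, Measure.restrict_apply hM]

/-- If the residue field is infinite, the integral vanishes. -/
theorem setIntegral_airy_eq_zero_of_incongruent (hμ : μ (hA.ball m : Set F) ≠ ⊤) {d : ℕ → F}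
    (hd : ∀ i, d i ∈ hA.ball m) (hdd : ∀ i j, i ≠ j → d i - d j ∉ hA.ball (m + 1))
    (hf : Integrable (airy ψ a b) (μ.restrict {t | t ≠ 0 ∧ v t = m})) :
    ∫ t in {t | t ≠ 0 ∧ v t = m}, airy ψ a b t ∂μ = 0 := by
  have : IsFiniteMeasure (μ.restrict (hA.ball m : Set F)) := isFiniteMeasure_restrict.2 hμ
  have h3 := hA.map_three_nonneg
  have hm := hA.level_lt
  have ha := hA.map_lead_le
  obtain ⟨x, hx0, hx1, hψx⟩ := hA.char_nontriv
  have h6 : (6 : F) ≠ 0 := by norm_num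
  have hv6 : v 6 = v 3 := by
    rw [show (6 : F) = 2 * 3 by norm_num, hA.map_mul _ _ two_ne_zero three_ne_zero, hA.map_two,
      zero_add]
  have hδ : ∀ i j, i ≠ j → d i - d j ≠ 0 ∧ v (d i - d j) = m := fun i j hij ↦
    hA.mem_ball_and_notMem_iff.1 ⟨sub_mem (hd i) (hd j), hdd i j hij⟩
  set H : (ℕ × ℕ) × ℕ × ℕ → F :=
    fun p ↦ x / (6 * a * (d p.1.1 - d p.1.2) * (d p.2.1 - d p.2.2)) with hHdef
  have hH : ∀ p, H p ∈ hA.ball (-1 - (v 3 + v a + 2 * m)) := by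
    rintro ⟨⟨i, j⟩, k, l⟩
    rcases eq_or_ne i j with rfl | hij
    · exact Or.inl (by simp [hHdef])
    rcases eq_or_ne k l with rfl | hkl
    · exact Or.inl (by simp [hHdef])
    obtain ⟨h1, h2⟩ := hδ i j hij
    obtain ⟨h1', h2'⟩ := hδ k l hkl
    have h6a : 6 * a ≠ 0 := mul_ne_zero h6 hA.lead_ne_zero
    refine hA.mem_ball_of_le ?_
    rw [hHdef, hA.map_div hx0 (mul_ne_zero (mul_ne_zero h6a h1) h1'),
      hA.map_mul _ _ (mul_ne_zero h6a h1) h1', hA.map_mul _ _ h6a h1,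
      hA.map_mul _ _ h6 hA.lead_ne_zero]
    lia
  refine hA.setIntegral_airy_eq_zero_of_cover hH hf ?_
  have hmeas : ∀ p, AEStronglyMeasurable (fun t ↦ airy ψ a b (H p + t))
      (μ.restrict {t | t ≠ 0 ∧ v t = m}) := fun p ↦
    hf.1.comp_measurePreserving (hA.measurePreserving_annulus (hH p))
  have hf1 := hf.1
  rw [hA.restrict_annulus_eq_restrict_ball hμ hd hdd] at hmeas hf1 ⊢
  set N : Set F := ⋂ p, {t | airy ψ a b (H p + t) = airy ψ a b t} with hN
  have hNm : NullMeasurableSet N (μ.restrict (hA.ball m : Set F)) :=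
    .iInter fun p ↦ (hmeas p).nullMeasurableSet_eq_fun hf1
  have hN1 : ∀ t ∈ N, t ∈ hA.ball m → ∀ p, ψ ((3 * a * t ^ 2 + b) * H p) = 1 := by
    intro t htN htm p
    have h := Set.mem_iInter.1 htN p
    rw [Set.mem_ofPred_eq, hA.airy_add htm (hH p)] at h
    exact (mul_eq_right₀ (hA.airy_ne_zero t)).1 h
  have hN0 : μ.restrict (hA.ball m : Set F) N = 0 := by
    by_contra hne
    have hpres : ∀ i, MeasurePreserving (d i + ·) (μ.restrict (hA.ball m : Set F))
        (μ.restrict (hA.ball m : Set F)) := fun i ↦ hA.measurePreserving_ball (hd i)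
    have hpre : ∀ {S : Set F}, NullMeasurableSet S (μ.restrict (hA.ball m : Set F)) →
        ∀ i j, NullMeasurableSet (S ∩ ((d i - d j) + ·) ⁻¹' S)
          (μ.restrict (hA.ball m : Set F)) := fun hS i j ↦ hS.inter (hS.preimage
      (hA.measurePreserving_ball (sub_mem (hd i) (hd j))).quasiMeasurePreserving)
    obtain ⟨i, j, hij, hne1⟩ := exists_measure_inter_translate_ne_zero hpres hNm hne
    obtain ⟨k, l, hkl, hne2⟩ := exists_measure_inter_translate_ne_zero hpres (hpre hNm i j) hne1
    rw [Measure.restrict_apply₀ (hpre (hpre hNm i j) k l)] at hne2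
    obtain ⟨t, ⟨⟨h00, h10⟩, h01, h11⟩, htm⟩ := nonempty_of_measure_ne_zero hne2
    have hij' := sub_mem (hd i) (hd j)
    have hkl' := sub_mem (hd k) (hd l)
    refine hψx ?_
    have h := hA.char_six_eq_one (hN1 _ h00 htm ((i, j), k, l))
      (hN1 _ h10 (add_mem hij' htm) _) (hN1 _ h01 (add_mem hkl' htm) _)
      (hN1 _ h11 (add_mem hij' (add_mem hkl' htm)) _)
    rw [← h, hHdef, mul_div_cancel₀ x (mul_ne_zero (mul_ne_zero (mul_ne_zero h6 hA.lead_ne_zero)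
      (hδ i j hij).1) (hδ k l hkl).1)]
  rw [ae_iff]
  convert hN0 using 2
  ext t
  simp [hN]

theorem setIntegral_airy_eq_zero (hμ : μ (hA.ball m : Set F) ≠ ⊤) :
    ∫ t in {t | t ≠ 0 ∧ v t = m}, airy ψ a b t ∂μ = 0 := by
  by_cases hf : Integrable (airy ψ a b) (μ.restrict {t | t ≠ 0 ∧ v t = m})
  swap
  · exact integral_undef hf
  rcases exists_seq_representatives_or_incongruent (hA.ball 1) (S := hA.ball 0)
    ⟨0, zero_mem _⟩ with ⟨r, hr, hrep⟩ | ⟨c, hc, hcc⟩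
  · exact hA.setIntegral_airy_eq_zero_of_representatives hr hrep hf
  · obtain ⟨x, hx0, hx1, -⟩ := hA.char_nontriv
    obtain ⟨z, hz0, hz⟩ := hA.exists_eq hx0 hx1 m
    refine hA.setIntegral_airy_eq_zero_of_incongruent hμ (d := fun i ↦ z * c i)
      (fun i ↦ hA.ball_anti (by lia) (hA.mul_mem_ball (hA.mem_ball_of_le hz.ge) (hc i)))
      (fun i j hij hmem ↦ ?_) hf
    obtain ⟨h1, h2⟩ := (hA.mem_ball_and_notMem_iff (n := 0)).1
      ⟨sub_mem (hc i) (hc j), hcc i j hij⟩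
    rw [← mul_sub] at hmem
    have := hmem.resolve_left (mul_ne_zero hz0 h1)
    rw [hA.map_mul _ _ hz0 h1] at this
    lia

end IsAiryPhase

end AiryVanishing

/-- The "airy_lemma": if `v(a) ≤ min{0, v(b)}`, then for every integer `m < -v(3)`, the
integral of `ψ(a t³ + b t)` over the annulus `𝔭^m \ 𝔭^{m+1} = {t : v(t) = m}` vanishes. -/
theorem stmt_5 {F : Type*} [Field F] [CharZero F] [MeasurableSpace F]
    (μ : Measure F) (v : F → ℤ) (q : ℝ) (ψ : F → ℂ)
    (hq : 1 < q)
    (hv_mul : ∀ x y : F, x ≠ 0 → y ≠ 0 → v (x * y) = v x + v y)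
    (hv_add : ∀ x y : F, x ≠ 0 → y ≠ 0 → x + y ≠ 0 → min (v x) (v y) ≤ v (x + y))
    (hodd : v 2 = 0)
    (hμ : ∀ n : ℤ, μ {x : F | x = 0 ∨ n ≤ v x} = ENNReal.ofReal (q ^ (-n)))
    (hμ_inv : ∀ (a : F) (s : Set F), μ ((a + ·) ⁻¹' s) = μ s)
    (hψ_add : ∀ x y : F, ψ (x + y) = ψ x * ψ y)
    (hψ_triv : ∀ x : F, (x = 0 ∨ 0 ≤ v x) → ψ x = 1)
    (hψ_nontriv : ∃ x : F, x ≠ 0 ∧ v x = -1 ∧ ψ x ≠ 1)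
    (a b : F) (ha0 : a ≠ 0) (ha : v a ≤ 0) (hab : b = 0 ∨ v a ≤ v b)
    (m : ℤ) (hm : m < -(v 3)) :
    ∫ t in {t : F | t ≠ 0 ∧ v t = m}, ψ (a * t ^ 3 + b * t) ∂μ = 0 := by
  have hA : AiryVanishing.IsAiryPhase v ψ a b m :=
    ⟨⟨hv_mul, hv_add⟩, hodd, hψ_add, hψ_triv, hψ_nontriv, ha0, ha, hab, hm⟩
  refine AiryVanishing.setIntegral_eq_zero_of_caratheodory μ _ (AiryVanishing.airy ψ a b) ?_
  have hle := le_toOuterMeasure_caratheodory μ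
  have hfin : (@OuterMeasure.toMeasure F μ.toOuterMeasure.caratheodory μ.toOuterMeasure le_rfl)
      (hA.ball m : Set F) ≠ ⊤ := by
    refine ne_top_of_le_ne_top (b := μ (toMeasurable μ (hA.ball m : Set F))) ?_ ?_
    · rw [measure_toMeasurable]
      exact (hμ m).trans_ne ENNReal.ofReal_ne_top
    · refine (measure_mono (subset_toMeasurable μ _)).trans_eq ?_
      exact @toMeasure_apply F μ.toOuterMeasure.caratheodory μ.toOuterMeasure le_rfl _
        (hle _ (measurableSet_toMeasurable μ _))
  have hadd := AiryVanishing.measurableAdd_caratheodory μ.toOuterMeasure hμ_inv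
  have hinv := AiryVanishing.isAddLeftInvariant_toMeasure_caratheodory μ.toOuterMeasure hμ_inv
  exact @AiryVanishing.IsAiryPhase.setIntegral_airy_eq_zero F _ v ψ a b m hA _
    μ.toOuterMeasure.caratheodory hadd _ hinv hfin
end

section
/- With Ai(a;b) := q^{−v(a)/3} ∫_{t∈O} ψ(a t³ + b t) dt and v(a) < 0: if v(a) ≤ v(b) < (1/3) v(a), then |Ai(a;b)| ≤ 2 q^{2 + v(3)} q^{−v(a)/12 + v(b)/4}. -/
open MeasureTheory

theorem exists_invariant_measure_addSubgroup {F : Type*} [AddCommGroup F] [MeasurableSpace F]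
    (μ : Measure F) (hinv : ∀ (a : F) (s : Set F), μ ((a + ·) ⁻¹' s) = μ s) (H : AddSubgroup F) :
    ∃ (m : MeasurableSpace H) (P : @Measure H m), @MeasurableAdd H m _ ∧
      @Measure.IsAddLeftInvariant H m _ P ∧ @Measure.IsComplete H m P ∧
      (∀ s : Set H, P s ≤ μ (Subtype.val '' s)) ∧ @Measurable _ _ m _ (Subtype.val : H → F) ∧
      @Measure.map _ _ m _ Subtype.val P = μ.restrict (H : Set F) := by
  set lam : OuterMeasure H := OuterMeasure.comap Subtype.val μ.toOuterMeasure with hlam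
  have lam_apply : ∀ s : Set H, lam s = μ (Subtype.val '' s) := fun s => by
    simp [hlam, OuterMeasure.comap_apply]
  have lam_inv : ∀ (y : H) (s : Set H), lam ((y + ·) ⁻¹' s) = lam s := fun y s => by
    rw [lam_apply, lam_apply, ← hinv (y : F) (Subtype.val '' s)]
    congr 1
    ext x
    constructor
    · rintro ⟨z, hz, rfl⟩
      exact ⟨y + z, hz, rfl⟩
    · rintro ⟨z, hz, hzx⟩
      have hx : x = ((z - y : H) : F) := by
        have : (z : F) = (y : F) + x := hzx
        simp [this]
      exact ⟨z - y, by simpa using hz, hx.symm⟩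
  let m : MeasurableSpace H := lam.caratheodory
  let P : @Measure H m := lam.toMeasure le_rfl
  have P_apply : ∀ s : Set H, MeasurableSet[m] s → P s = lam s := fun s hs =>
    toMeasure_apply _ _ hs
  have meas_add : ∀ y : H, Measurable[m, m] (y + ·) := by
    intro y s hs t
    have h1 := hs ((-y + ·) ⁻¹' t)
    have e1 : (-y + ·) ⁻¹' t ∩ s = (-y + ·) ⁻¹' (t ∩ (y + ·) ⁻¹' s) := by
      ext; simp
    have e2 : (-y + ·) ⁻¹' t \ s = (-y + ·) ⁻¹' (t \ (y + ·) ⁻¹' s) := by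
      ext; simp
    rw [e1, e2, lam_inv, lam_inv, lam_inv] at h1
    exact h1
  have meas_val : @Measurable _ _ m _ (Subtype.val : H → F) := by
    intro A hA t
    rw [lam_apply, lam_apply, lam_apply, ← measure_inter_add_sdiff (Subtype.val '' t) hA]
    congr 2
    · ext; simp
    · ext; simp
  refine ⟨m, P, ?_, ?_, ?_, ?_, meas_val, ?_⟩
  · exact @MeasurableAdd.mk _ m _ meas_add fun y => by simpa only [add_comm] using meas_add y
  · refine @Measure.IsAddLeftInvariant.mk _ m _ _ fun y => ?_
    refine @Measure.ext _ m _ _ fun s hs => ?_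
    rw [@Measure.map_apply _ _ m m P _ (meas_add y) s hs, P_apply _ (meas_add y hs), P_apply _ hs,
      lam_inv]
  · refine @Measure.IsComplete.mk _ m _ fun s hs => ?_
    have h0 : lam s = 0 := le_antisymm (hs ▸ le_toMeasure_apply lam le_rfl s) bot_le
    refine (OuterMeasure.isCaratheodory_iff_le' lam).2 fun t => ?_
    rw [measure_mono_null Set.inter_subset_right h0, zero_add]
    exact measure_mono Set.sdiff_subset
  · intro s
    obtain ⟨A, hsA, hA, hAμ⟩ := exists_measurable_superset μ (Subtype.val '' s)
    rw [← hAμ]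
    calc P s ≤ P (Subtype.val ⁻¹' A) := by
          refine @measure_mono _ _ _ _ _ _ _ ?_
          exact fun x hx => hsA ⟨x, hx, rfl⟩
      _ = μ (Subtype.val '' (Subtype.val ⁻¹' A : Set H)) := by
          rw [P_apply _ (meas_val hA), lam_apply]
      _ ≤ μ A := measure_mono (by rintro _ ⟨x, hx, rfl⟩; exact hx)
  · ext A hA
    rw [@Measure.map_apply _ _ m _ P _ meas_val A hA, P_apply _ (meas_val hA), lam_apply,
      Measure.restrict_apply hA]
    congr 1
    ext; simp

/-- `v` is multiplicative and ultrametric away from `0`; its value at `0` carries no meaning. -/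
structure IsIntValuation {F : Type*} [Field F] (v : F → ℤ) : Prop where
  map_mul : ∀ x y : F, x ≠ 0 → y ≠ 0 → v (x * y) = v x + v y
  map_add : ∀ x y : F, x ≠ 0 → y ≠ 0 → x + y ≠ 0 → min (v x) (v y) ≤ v (x + y)

namespace IsIntValuation

variable {F : Type*} [Field F] {v : F → ℤ}

theorem map_one (h : IsIntValuation v) : v 1 = 0 := by
  have := h.map_mul 1 1 one_ne_zero one_ne_zero
  rw [mul_one] at this
  omega

theorem map_neg (h : IsIntValuation v) (x : F) : v (-x) = v x := by
  rcases eq_or_ne x 0 with rfl | hx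
  · simp
  have h1 := h.map_mul (-1) (-1) (by simp) (by simp)
  have h2 := h.map_mul (-1) x (by simp) hx
  rw [neg_one_mul] at h1 h2
  rw [neg_neg, h.map_one] at h1
  omega

theorem map_inv (h : IsIntValuation v) {x : F} (hx : x ≠ 0) : v x⁻¹ = -v x := by
  have h1 := h.map_mul x x⁻¹ hx (inv_ne_zero hx)
  rw [mul_inv_cancel₀ hx, h.map_one] at h1
  omega

theorem map_zpow (h : IsIntValuation v) {x : F} (hx : x ≠ 0) (n : ℤ) : v (x ^ n) = n * v x := by
  induction n using Int.induction_on with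
  | zero => simp [h.map_one]
  | succ n ih => rw [zpow_add_one₀ hx, h.map_mul _ _ (zpow_ne_zero _ hx) hx, ih]; ring
  | pred n ih =>
    rw [zpow_sub_one₀ hx, h.map_mul _ _ (zpow_ne_zero _ hx) (inv_ne_zero hx), ih, h.map_inv hx]
    ring

variable (h : IsIntValuation v)

/-- The fractional ideal `{x | n ≤ v x}`. -/
def ball (n : ℤ) : AddSubgroup F where
  carrier := {x | x = 0 ∨ n ≤ v x}
  zero_mem' := Or.inl rfl
  add_mem' := by
    rintro x y hx hy
    by_cases x0 : x = 0
    · simpa [x0] using hy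
    by_cases y0 : y = 0
    · simpa [y0] using hx
    by_cases xy0 : x + y = 0
    · exact Or.inl xy0
    have := h.map_add x y x0 y0 xy0
    exact Or.inr ((le_min (hx.resolve_left x0) (hy.resolve_left y0)).trans this)
  neg_mem' := by
    rintro x (rfl | hx)
    · exact Or.inl neg_zero
    · exact Or.inr (by rwa [h.map_neg])

theorem mem_ball {n : ℤ} {x : F} : x ∈ h.ball n ↔ x = 0 ∨ n ≤ v x := Iff.rfl

theorem mem_ball_iff {n : ℤ} {x : F} (hx : x ≠ 0) : x ∈ h.ball n ↔ n ≤ v x := by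
  simp [mem_ball, hx]

theorem ball_anti {m n : ℤ} (hmn : m ≤ n) : h.ball n ≤ h.ball m := by
  rintro x (rfl | hx)
  · exact Or.inl rfl
  · exact Or.inr (hmn.trans hx)

theorem mul_mem_ball_iff {c : F} (hc : c ≠ 0) {n : ℤ} {x : F} :
    c * x ∈ h.ball n ↔ x ∈ h.ball (n - v c) := by
  rcases eq_or_ne x 0 with rfl | hx
  · simp
  rw [h.mem_ball_iff (mul_ne_zero hc hx), h.mem_ball_iff hx, h.map_mul _ _ hc hx]
  omega

theorem mul_mem_ball {m n k : ℤ} {x y : F} (hx : x ∈ h.ball m) (hy : y ∈ h.ball n)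
    (hk : k ≤ m + n) : x * y ∈ h.ball k := by
  rcases eq_or_ne x 0 with rfl | x0
  · simp
  rw [h.mul_mem_ball_iff x0]
  rw [h.mem_ball_iff x0] at hx
  exact h.ball_anti (by omega) hy

theorem self_mem_ball (x : F) : x ∈ h.ball (v x) := Or.inr le_rfl

theorem one_mem_ball : (1 : F) ∈ h.ball 0 := Or.inr h.map_one.ge

theorem sq_mem_ball {n : ℤ} {x : F} (hx : x ≠ 0) : x ^ 2 ∈ h.ball n ↔ n ≤ 2 * v x := by
  rw [h.mem_ball_iff (pow_ne_zero 2 hx), pow_two, h.map_mul _ _ hx hx]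
  omega

end IsIntValuation

/-- `ψ` has conductor exactly the ring of integers of `v`. -/
structure HasTrivialConductor {F : Type*} [Field F] {v : F → ℤ} (h : IsIntValuation v)
    (ψ : AddChar F ℂ) : Prop where
  map_eq_one : ∀ x ∈ h.ball 0, ψ x = 1
  exists_ne_one : ∃ x : F, x ≠ 0 ∧ v x = -1 ∧ ψ x ≠ 1

namespace HasTrivialConductor

variable {F : Type*} [Field F] {v : F → ℤ} {h : IsIntValuation v} {ψ : AddChar F ℂ}

theorem exists_mul_ne_one (hψ : HasTrivialConductor h ψ) {c : F} {k : ℤ}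
    (hc : c ∉ h.ball (-k)) : ∃ y ∈ h.ball k, ψ (c * y) ≠ 1 := by
  obtain ⟨x, hx0, hx, hne⟩ := hψ.exists_ne_one
  have hc0 : c ≠ 0 := fun h0 => hc (Or.inl h0)
  rw [h.mem_ball_iff hc0] at hc
  refine ⟨x * c⁻¹, Or.inr ?_, ?_⟩
  · rw [h.map_mul _ _ hx0 (inv_ne_zero hc0), h.map_inv hc0]
    omega
  · rwa [mul_comm x, mul_inv_cancel_left₀ hc0]

theorem exists_uniformizer (hψ : HasTrivialConductor h ψ) : ∃ ϖ : F, ϖ ≠ 0 ∧ v ϖ = 1 := by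
  obtain ⟨x, hx0, hx, -⟩ := hψ.exists_ne_one
  exact ⟨x⁻¹, inv_ne_zero hx0, by rw [h.map_inv hx0, hx, neg_neg]⟩

end HasTrivialConductor

theorem QuotientAddGroup.preimage_mk_singleton {E : Type*} [AddCommGroup E]
    (K : AddSubgroup E) (x : E) :
    (QuotientAddGroup.mk ⁻¹' {(x : E ⧸ K)} : Set E) = (-x + ·) ⁻¹' K := by
  ext z
  simp only [Set.mem_preimage, Set.mem_singleton_iff, SetLike.mem_coe]
  rw [eq_comm, QuotientAddGroup.eq]

section InvariantMeasure

variable {E : Type*} [AddCommGroup E] [MeasurableSpace E] [MeasurableAdd E]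
  {P : Measure E} [P.IsAddLeftInvariant]

theorem AddChar.norm_eq_one_of_measurable [IsProbabilityMeasure P] (f : AddChar E ℂ)
    (hf : Measurable f) (y : E) : ‖f y‖ = 1 := by
  have hpos : ∀ x, 0 < ‖f x‖ := fun x => norm_pos_iff.2 (f.val_isUnit x).ne_zero
  set A : ℕ → Set E := fun n => {x | ‖f x‖ ≤ n ∧ ‖f (-x)‖ ≤ n} with hA
  have hAmono : Monotone A := fun m n hmn x hx =>
    ⟨hx.1.trans (by exact_mod_cast hmn), hx.2.trans (by exact_mod_cast hmn)⟩
  have hneg : ∀ x, ‖f (-x)‖ = ‖f x‖⁻¹ := fun x => by rw [AddChar.map_neg_eq_inv, norm_inv]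
  have hAmeas : ∀ n, MeasurableSet (A n) := fun n => by
    simp only [hA, hneg]
    exact (measurableSet_le hf.norm measurable_const).inter
      (measurableSet_le hf.norm.inv measurable_const)
  have hAU : ⋃ n, A n = Set.univ := by
    refine Set.eq_univ_of_forall fun x => ?_
    obtain ⟨n, hn⟩ := exists_nat_ge (max ‖f x‖ ‖f (-x)‖)
    exact Set.mem_iUnion.2 ⟨n, (le_max_left _ _).trans hn, (le_max_right _ _).trans hn⟩
  obtain ⟨n, hn⟩ : ∃ n, (1 / 2 : ENNReal) < P (A n) := by
    have ht := tendsto_measure_iUnion_atTop (μ := P) hAmono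
    rw [hAU, measure_univ] at ht
    exact (ht.eventually_const_lt (by simp)).exists
  have key : ∀ z, ‖f z‖ ≤ n * n := by
    intro z
    have hmeas : P ((z + ·) ⁻¹' A n) = P (A n) := measure_preimage_add P z (A n)
    have hne : (A n ∩ (z + ·) ⁻¹' A n).Nonempty := by
      refine nonempty_inter_of_measure_lt_add P (measurable_const_add z (hAmeas n))
        (Set.subset_univ _) (Set.subset_univ _) ?_
      rw [measure_univ, hmeas]
      calc (1 : ENNReal) = 1 / 2 + 1 / 2 := (ENNReal.add_halves 1).symm
        _ < _ := ENNReal.add_lt_add hn hn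
    obtain ⟨x, hx, hzx⟩ := hne
    have : f z = f (z + x) * f (-x) := by rw [← AddChar.map_add_eq_mul]; simp
    rw [this, norm_mul]
    exact mul_le_mul hzx.1 hx.2 (norm_nonneg _) (by positivity)
  have hle : ∀ z, ‖f z‖ ≤ 1 := by
    intro z
    by_contra hlt
    obtain ⟨k, hk⟩ := pow_unbounded_of_one_lt ((n : ℝ) * n) (not_le.1 hlt)
    have := key (k • z)
    rw [AddChar.map_nsmul_eq_pow, norm_pow] at this
    linarith
  refine le_antisymm (hle y) ?_
  have := hle (-y)
  rw [hneg] at this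
  exact (one_le_inv₀ (inv_pos.2 (hpos y))).2 this |>.trans_eq (inv_inv _)

theorem integral_eq_zero_of_translate_eq_mul {f : E → ℂ} {y : E} {θ : ℂ} (hθ : θ ≠ 1)
    (hf : ∀ x, f (y + x) = θ * f x) : ∫ x, f x ∂P = 0 := by
  have h1 := integral_add_left_eq_self (μ := P) f y
  simp only [hf, integral_const_mul] at h1
  have h2 : (θ - 1) * ∫ x, f x ∂P = 0 := by rw [sub_mul, h1]; ring
  exact (mul_eq_zero.1 h2).resolve_left (sub_ne_zero.2 hθ)

open ComplexConjugate in
theorem integral_eq_zero_of_orthogonal_translates [IsProbabilityMeasure P] {f : E → ℂ}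
    (hf : Measurable f) (hf1 : ∀ x, ‖f x‖ = 1) {Z : Set E} (hZ : Z.Infinite)
    (ho : ∀ z ∈ Z, ∀ w ∈ Z, z ≠ w → ∫ x, f (z + x) * conj (f (w + x)) ∂P = 0) :
    ∫ x, f x ∂P = 0 := by
  have hbound : ∀ n : ℕ, n * ‖∫ x, f x ∂P‖ ^ 2 ≤ 1 := by
    intro n
    rcases Nat.eq_zero_or_pos n with rfl | hn
    · simp
    obtain ⟨s, hsZ, hs⟩ := hZ.exists_subset_card_eq n
    have hmeas : ∀ z : E, Measurable fun x => f (z + x) :=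
      fun z => hf.comp (measurable_const_add z)
    have hintegrable : ∀ z : E, Integrable (fun x => f (z + x)) P := fun z =>
      Integrable.of_bound (hmeas z).aestronglyMeasurable 1 (.of_forall fun x => (hf1 _).le)
    have hintegrable2 : ∀ z w : E, Integrable (fun x => f (z + x) * conj (f (w + x))) P := fun z w =>
      Integrable.of_bound ((hmeas z).mul
        (Complex.continuous_conj.measurable.comp (hmeas w))).aestronglyMeasurable 1
        (.of_forall fun x => by simp [hf1])
    set G : E → ℂ := fun x => ∑ z ∈ s, f (z + x) with hG
    have hGint : Integrable G P := integrable_finsetSum _ fun z _ => hintegrable z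
    have hG1 : ∫ x, G x ∂P = n * ∫ x, f x ∂P := by
      rw [integral_finsetSum _ fun z _ => hintegrable z]
      simp [integral_add_left_eq_self, hs]
    have hGsq : ∀ x, ((‖G x‖ ^ 2 : ℝ) : ℂ) = ∑ z ∈ s, ∑ w ∈ s, f (z + x) * conj (f (w + x)) := by
      intro x
      rw [Complex.ofReal_pow, ← Complex.mul_conj', hG, map_sum, Finset.sum_mul_sum]
    have hG2 : ∫ x, ‖G x‖ ^ 2 ∂P = n := by
      have : ((∫ x, ‖G x‖ ^ 2 ∂P : ℝ) : ℂ) = n := by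
        rw [← integral_complex_ofReal]
        simp_rw [hGsq]
        rw [integral_finsetSum _ fun z _ => integrable_finsetSum _ fun w _ => hintegrable2 z w]
        have : ∀ z ∈ s, ∫ x, ∑ w ∈ s, f (z + x) * conj (f (w + x)) ∂P = 1 := by
          intro z hz
          rw [integral_finsetSum _ fun w _ => hintegrable2 z w, Finset.sum_eq_single_of_mem z hz]
          · simp [Complex.mul_conj', hf1]
          · exact fun w hw hwz => ho z (hsZ hz) w (hsZ hw) hwz.symm
        rw [Finset.sum_congr rfl this]
        simp [hs]
      exact_mod_cast this
    have hGsqint : Integrable (fun x => ‖G x‖ ^ 2) P := by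
      by_contra hni
      rw [integral_undef hni] at hG2
      exact hn.ne (by exact_mod_cast hG2)
    have hn' : (0 : ℝ) < √n := Real.sqrt_pos.2 (by exact_mod_cast hn)
    have hsq : √(n : ℝ) * √n = n := Real.mul_self_sqrt (by positivity)
    have h1 : ‖∫ x, G x ∂P‖ * (2 * √n) ≤ n + n := by
      calc ‖∫ x, G x ∂P‖ * (2 * √n) ≤ (∫ x, ‖G x‖ ∂P) * (2 * √n) := by
            gcongr
            exact norm_integral_le_integral_norm _
        _ = ∫ x, ‖G x‖ * (2 * √n) ∂P := (integral_mul_const _ _).symm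
        _ ≤ ∫ x, (‖G x‖ ^ 2 + n) ∂P := by
            refine integral_mono (hGint.norm.mul_const _) (hGsqint.add (integrable_const _))
              fun x => ?_
            show ‖G x‖ * (2 * √n) ≤ ‖G x‖ ^ 2 + n
            nlinarith [sq_nonneg (‖G x‖ - √n)]
        _ = n + n := by
            rw [integral_add hGsqint (integrable_const _), hG2]
            simp
    rw [hG1, norm_mul, Complex.norm_natCast] at h1
    have h2 : ‖∫ x, f x ∂P‖ * √n ≤ 1 := by
      have : (n : ℝ) * (‖∫ x, f x ∂P‖ * √n) ≤ n * 1 := by linarith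
      exact le_of_mul_le_mul_left this (by exact_mod_cast hn)
    calc n * ‖∫ x, f x ∂P‖ ^ 2 = (‖∫ x, f x ∂P‖ * √n) ^ 2 := by
          rw [mul_pow, pow_two √(n : ℝ), hsq, mul_comm]
      _ ≤ 1 := pow_le_one₀ (by positivity) h2
  by_contra hne
  have hpos : 0 < ‖∫ x, f x ∂P‖ ^ 2 := by positivity
  obtain ⟨n, hn⟩ := exists_nat_gt (1 / ‖∫ x, f x ∂P‖ ^ 2)
  rw [div_lt_iff₀ hpos] at hn
  linarith [hbound n]

theorem AddSubgroup.measurableSet_of_add_mem {K : AddSubgroup E} [Finite (E ⧸ K)]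
    (hK : MeasurableSet (K : Set E)) {T : Set E} (hT : ∀ x ∈ T, ∀ y ∈ K, x + y ∈ T) :
    MeasurableSet T := by
  have hTU : T = ⋃ c ∈ (QuotientAddGroup.mk '' T : Set (E ⧸ K)), QuotientAddGroup.mk ⁻¹' {c} := by
    ext z
    simp only [Set.mem_iUnion, exists_prop, Set.mem_image]
    constructor
    · exact fun hz => ⟨_, ⟨z, hz, rfl⟩, rfl⟩
    · rintro ⟨_, ⟨x, hx, rfl⟩, hz⟩
      rw [QuotientAddGroup.preimage_mk_singleton] at hz
      simpa using hT x hx _ hz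
  rw [hTU]
  refine (Set.toFinite _).measurableSet_biUnion ?_
  rintro _ ⟨x, -, rfl⟩
  rw [QuotientAddGroup.preimage_mk_singleton]
  exact measurable_const_add _ hK

theorem setIntegral_eq_zero_of_coset_integral {K : AddSubgroup E} [Finite (E ⧸ K)]
    (hK : MeasurableSet (K : Set E)) {f : E → ℂ} (hf : Integrable f P) {T : Set E}
    (hT : ∀ x ∈ T, ∀ y ∈ K, x + y ∈ T) (h0 : ∀ x ∈ T, ∫ y in K, f (x + y) ∂P = 0) :
    ∫ x in T, f x ∂P = 0 := by
  have := Fintype.ofFinite (E ⧸ K)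
  have hmk : ∀ c : E ⧸ K, MeasurableSet (QuotientAddGroup.mk ⁻¹' {c} : Set E) := by
    intro c
    obtain ⟨x, rfl⟩ := QuotientAddGroup.mk_surjective c
    rw [QuotientAddGroup.preimage_mk_singleton]
    exact measurable_const_add _ hK
  have hTm := AddSubgroup.measurableSet_of_add_mem hK hT
  have hTU : T = ⋃ c : E ⧸ K, T ∩ QuotientAddGroup.mk ⁻¹' {c} := by
    ext z; simp
  rw [hTU, integral_iUnion_fintype (fun c => hTm.inter (hmk c)) _ fun c => hf.integrableOn]
  · refine Finset.sum_eq_zero fun c _ => ?_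
    rcases (T ∩ QuotientAddGroup.mk ⁻¹' {c}).eq_empty_or_nonempty with he | ⟨x, hx, rfl⟩
    · simp [he]
    have hpiece : T ∩ QuotientAddGroup.mk ⁻¹' {(x : E ⧸ K)} = (-x + ·) ⁻¹' K := by
      rw [QuotientAddGroup.preimage_mk_singleton, Set.inter_eq_right]
      intro z hz
      simpa using hT x hx _ hz
    rw [hpiece, ← h0 x hx, ← integral_indicator (measurable_const_add _ hK),
      ← integral_indicator hK, ← integral_add_left_eq_self _ x]
    congr 1
    ext y
    have hy : x + y ∈ (-x + ·) ⁻¹' (K : Set E) ↔ y ∈ (K : Set E) := by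
      rw [Set.mem_preimage, neg_add_cancel_left]
    by_cases hyK : y ∈ (K : Set E)
    · rw [Set.indicator_of_mem hyK, Set.indicator_of_mem (hy.2 hyK)]
    · rw [Set.indicator_of_notMem hyK, Set.indicator_of_notMem (mt hy.1 hyK)]
  · intro c d hcd
    refine Set.disjoint_left.2 fun z hz hz' => hcd ?_
    exact hz.2.symm.trans hz'.2

end InvariantMeasure

/-- The integrand `ψ(a x³ + b x)` of the Airy integral. -/
def cubicPhase {F : Type*} [Field F] (ψ : AddChar F ℂ) (a b x : F) : ℂ :=
  ψ (a * x ^ 3 + b * x)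

namespace HasTrivialConductor

variable {F : Type*} [Field F] {v : F → ℤ} {h : IsIntValuation v} {ψ : AddChar F ℂ}

theorem cubicPhase_add (hψ : HasTrivialConductor h ψ) {a b x y : F}
    (h2 : 3 * a * (x * (y * y)) ∈ h.ball 0) (h3 : a * (y * (y * y)) ∈ h.ball 0) :
    cubicPhase ψ a b (x + y) = cubicPhase ψ a b x * ψ ((3 * a * x ^ 2 + b) * y) := by
  have e : a * (x + y) ^ 3 + b * (x + y) = (a * x ^ 3 + b * x) + (3 * a * x ^ 2 + b) * y +
      (3 * a * (x * (y * y)) + a * (y * (y * y))) := by ring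
  rw [cubicPhase, e, AddChar.map_add_eq_mul, AddChar.map_add_eq_mul,
    hψ.map_eq_one _ (add_mem h2 h3), mul_one, cubicPhase]

theorem exists_finite_representatives (hψ : HasTrivialConductor h ψ)
    (hfin : Finite (h.ball 0 ⧸ (h.ball 1).addSubgroupOf (h.ball 0))) (n : ℕ) :
    ∃ R : Set (h.ball 0), R.Finite ∧ ∀ x ∈ h.ball 0, ∃ r ∈ R, x - r ∈ h.ball n := by
  obtain ⟨ϖ, hϖ0, hϖ⟩ := hψ.exists_uniformizer
  induction n with
  | zero => exact ⟨{0}, Set.finite_singleton 0, fun x hx => ⟨0, rfl, by simpa using hx⟩⟩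
  | succ n ih =>
    obtain ⟨R, hR, hRx⟩ := ih
    have hϖn : v (ϖ ^ n) = n := by
      rw [← zpow_natCast, h.map_zpow hϖ0, hϖ, mul_one]
    have hpow : ∀ x : h.ball 0, ϖ ^ n * (x : F) ∈ h.ball 0 := fun x => by
      rw [h.mul_mem_ball_iff (pow_ne_zero _ hϖ0), hϖn]
      exact h.ball_anti (by omega) x.2
    let out : h.ball 0 ⧸ (h.ball 1).addSubgroupOf (h.ball 0) → h.ball 0 := Quotient.out
    refine ⟨Set.image2 (fun r c => r + ⟨ϖ ^ n * (out c : F), hpow _⟩) R Set.univ,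
      hR.image2 _ Set.finite_univ, fun x hx => ?_⟩
    obtain ⟨r, hr, hxr⟩ := hRx x hx
    have hu : (ϖ ^ n)⁻¹ * (x - r) ∈ h.ball 0 := by
      rw [h.mul_mem_ball_iff (inv_ne_zero (pow_ne_zero _ hϖ0)), h.map_inv (pow_ne_zero _ hϖ0), hϖn]
      simpa using hxr
    set u : h.ball 0 := ⟨_, hu⟩ with hu'
    have hout : -out (QuotientAddGroup.mk u) + u ∈ (h.ball 1).addSubgroupOf (h.ball 0) :=
      QuotientAddGroup.eq.1 (Quotient.out_eq _)
    refine ⟨_, Set.mem_image2_of_mem hr (Set.mem_univ (QuotientAddGroup.mk u)), ?_⟩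
    have e : x - (r + ϖ ^ n * (out (QuotientAddGroup.mk u) : F)) =
        ϖ ^ n * (-(out (QuotientAddGroup.mk u) : F) + u) := by
      have : x - r = ϖ ^ n * (u : F) := by
        rw [hu', mul_inv_cancel_left₀ (pow_ne_zero _ hϖ0)]
      linear_combination this
    change x - (r + ϖ ^ n * (out (QuotientAddGroup.mk u) : F)) ∈ _
    rw [e, h.mul_mem_ball_iff (pow_ne_zero _ hϖ0), hϖn]
    simpa [AddSubgroup.mem_addSubgroupOf] using hout

section Measure

variable [MeasurableSpace (h.ball 0)] [MeasurableAdd (h.ball 0)] {P : Measure (h.ball 0)}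
  [P.IsAddLeftInvariant]

theorem measurable_mul_of_measurable_cubicPhase {a b : F}
    (hg : Measurable fun x : h.ball 0 => cubicPhase ψ a b x) (c : h.ball 0) :
    Measurable fun x : h.ball 0 => ψ (6 * a * c * x) := by
  let o : h.ball 0 := ⟨1, h.one_mem_ball⟩
  have hadd : ∀ y : h.ball 0, Measurable fun x : h.ball 0 => cubicPhase ψ a b (x + y) := fun y =>
    hg.comp (measurable_add_const y)
  have e : (fun x : h.ball 0 => ψ (6 * a * c * x)) = fun x : h.ball 0 =>
      cubicPhase ψ a b (x + (c + o : h.ball 0)) * cubicPhase ψ a b x *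
        (cubicPhase ψ a b (x + c))⁻¹ * (cubicPhase ψ a b (x + o))⁻¹ *
        ψ (-(a * (3 * (c : F) ^ 2 + 3 * c))) := by
    ext x
    simp only [cubicPhase, ← AddChar.map_neg_eq_inv, ← AddChar.map_add_eq_mul]
    congr 1
    simp only [o, AddSubgroup.coe_add]
    ring
  rw [e]
  exact ((((hadd _).mul hg).mul (hadd _).inv).mul (hadd _).inv).mul_const _

theorem norm_eq_one_of_measurable_cubicPhase [IsProbabilityMeasure P] {a b : F} (ha : a ≠ 0)
    (hg : Measurable fun x : h.ball 0 => cubicPhase ψ a b x) {z : F} (hz : z ∈ h.ball (v a)) :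
    ‖ψ z‖ = 1 := by
  have hz' : a⁻¹ * z ∈ h.ball 0 := by
    rw [h.mul_mem_ball_iff (inv_ne_zero ha), h.map_inv ha]
    simpa using hz
  let f : AddChar (h.ball 0) ℂ :=
    ψ.compAddMonoidHom ((AddMonoidHom.mulLeft (6 * a)).comp (h.ball 0).subtype)
  have hf : Measurable f := by
    simpa [f, Function.comp_def] using
      measurable_mul_of_measurable_cubicPhase hg ⟨1, h.one_mem_ball⟩
  have h1 : ‖f ⟨_, hz'⟩‖ = 1 := f.norm_eq_one_of_measurable (P := P) hf _
  have h2 : f ⟨_, hz'⟩ = ψ z ^ 6 := by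
    rw [← AddChar.map_nsmul_eq_pow]
    change ψ (6 * a * (a⁻¹ * z)) = _
    congr 1
    field_simp
    simp
  rw [h2, norm_pow] at h1
  exact (pow_eq_one_iff_of_nonneg (norm_nonneg _) (by norm_num)).1 h1

open ComplexConjugate in
theorem integral_cubicPhase_eq_zero_of_infinite (hψ : HasTrivialConductor h ψ)
    [IsProbabilityMeasure P] {a b : F} (h6 : (6 : F) ≠ 0) (ha : a ≠ 0) (h6a : v (6 * a) < 0)
    (hinf : Infinite (h.ball 0 ⧸ (h.ball 1).addSubgroupOf (h.ball 0)))
    (hg : Measurable fun x : h.ball 0 => cubicPhase ψ a b x)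
    (hg1 : ∀ x : h.ball 0, ‖cubicPhase ψ a b x‖ = 1) :
    ∫ x : h.ball 0, cubicPhase ψ a b x ∂P = 0 := by
  have hconj : ∀ z : ℂ, ‖z‖ = 1 → conj z = z⁻¹ := fun z hz =>
    (Complex.inv_eq_conj hz).symm
  let out : h.ball 0 ⧸ (h.ball 1).addSubgroupOf (h.ball 0) → h.ball 0 := Quotient.out
  have hZ : (Set.range out).Infinite :=
    Set.infinite_range_of_injective Quotient.out_injective
  have hval : ∀ z ∈ Set.range out, ∀ w ∈ Set.range out, z ≠ w →
      (z - w : F) ≠ 0 ∧ v (z - w : F) = 0 := by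
    rintro _ ⟨c, rfl⟩ _ ⟨d, rfl⟩ hcd
    have hne : ((out c : F) - out d) ∉ h.ball 1 := by
      intro hmem
      refine hcd (congrArg out ?_)
      have hd : -out d + out c ∈ (h.ball 1).addSubgroupOf (h.ball 0) := by
        rw [AddSubgroup.mem_addSubgroupOf]
        simpa [sub_eq_add_neg, add_comm] using hmem
      have := QuotientAddGroup.eq.2 hd
      rw [show (QuotientAddGroup.mk (out c) : _ ⧸ _) = c from Quotient.out_eq c,
        show (QuotientAddGroup.mk (out d) : _ ⧸ _) = d from Quotient.out_eq d] at this
      exact this.symm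
    have hne0 : (out c : F) - out d ≠ 0 := fun h0 => hne (Or.inl h0)
    have h0 := (h.mem_ball_iff hne0).1 (sub_mem (out c).2 (out d).2)
    rw [h.mem_ball_iff hne0] at hne
    exact ⟨hne0, by omega⟩
  refine integral_eq_zero_of_orthogonal_translates hg hg1 hZ fun z hz w hw hzw => ?_
  have hmg : ∀ z : h.ball 0, Measurable fun x : h.ball 0 => cubicPhase ψ a b (z + x) :=
    fun z => hg.comp (measurable_const_add z)
  have hng : ∀ z x : h.ball 0, ‖cubicPhase ψ a b (z + x)‖ = 1 := fun z x => hg1 (z + x)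
  refine integral_eq_zero_of_orthogonal_translates
    (f := fun x : h.ball 0 => cubicPhase ψ a b (z + x) * conj (cubicPhase ψ a b (w + x)))
    ((hmg z).mul (Complex.continuous_conj.measurable.comp (hmg w))) (fun x => by simp [hng]) hZ
    fun z' hz' w' hw' hzw' => ?_
  obtain ⟨hne, hv⟩ := hval z hz w hw hzw
  obtain ⟨hne', hv'⟩ := hval z' hz' w' hw' hzw'
  have hc0 : 6 * a ≠ 0 := mul_ne_zero h6 ha
  have hc : 6 * a * (z - w) * (z' - w') ∉ h.ball (-0) := by
    rw [h.mem_ball_iff (mul_ne_zero (mul_ne_zero hc0 hne) hne'),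
      h.map_mul _ _ (mul_ne_zero hc0 hne) hne', h.map_mul _ _ hc0 hne]
    omega
  obtain ⟨y, hy, hyne⟩ := hψ.exists_mul_ne_one hc
  refine integral_eq_zero_of_translate_eq_mul (y := ⟨y, hy⟩) hyne fun x => ?_
  have hcg : ∀ s ∈ h.ball 0,
      conj (cubicPhase ψ a b s) = ψ (-(a * s ^ 3 + b * s)) := fun s hs => by
    rw [hconj _ (hg1 ⟨s, hs⟩), cubicPhase, AddChar.map_neg_eq_inv]
  simp only [AddSubgroup.coe_add, map_mul, Complex.conj_conj]
  rw [hcg _ (add_mem w.2 (add_mem z'.2 (add_mem hy x.2))),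
    hcg _ (add_mem z.2 (add_mem w'.2 (add_mem hy x.2))),
    hcg _ (add_mem w.2 (add_mem z'.2 x.2)), hcg _ (add_mem z.2 (add_mem w'.2 x.2))]
  simp only [cubicPhase]
  simp only [← AddChar.map_add_eq_mul]
  congr 1
  ring

end Measure

end HasTrivialConductor

namespace IsIntValuation

variable {F : Type*} [Field F] {v : F → ℤ} (h : IsIntValuation v)

/-- `{x | n ≤ v x}` as a subgroup of the ring of integers. -/
abbrev intBall (n : ℤ) : AddSubgroup (h.ball 0) := (h.ball n).addSubgroupOf (h.ball 0)

theorem mem_intBall {n : ℤ} {x : h.ball 0} : x ∈ h.intBall n ↔ (x : F) ∈ h.ball n :=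
  AddSubgroup.mem_addSubgroupOf

/-- The integers `x` of valuation at least `R` at which the derivative of `a x³ + b x` has
valuation at least `-k`. -/
def criticalSet (a b : F) (R k : ℤ) : Set (h.ball 0) :=
  {x | (x : F) ∈ h.ball R ∧ 3 * a * (x : F) ^ 2 + b ∈ h.ball (-k)}

end IsIntValuation

namespace HasTrivialConductor

variable {F : Type*} [Field F] {v : F → ℤ} {h : IsIntValuation v} {ψ : AddChar F ℂ}

theorem finite_quotient_intBall (hψ : HasTrivialConductor h ψ)
    (hfin : Finite (h.ball 0 ⧸ h.intBall 1)) (n : ℤ) : Finite (h.ball 0 ⧸ h.intBall n) := by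
  obtain ⟨R, hR, hRx⟩ := hψ.exists_finite_representatives hfin n.toNat
  have := hR.to_subtype
  refine Finite.of_surjective (fun r : R => (QuotientAddGroup.mk (r : h.ball 0))) fun c => ?_
  obtain ⟨x, rfl⟩ := QuotientAddGroup.mk_surjective c
  obtain ⟨r, hr, hxr⟩ := hRx x x.2
  refine ⟨⟨r, hr⟩, QuotientAddGroup.eq.2 (h.mem_intBall.2 ?_)⟩
  have := h.ball_anti (Int.self_le_toNat n) hxr
  simpa [sub_eq_add_neg, add_comm] using this

section Measure

variable [MeasurableSpace (h.ball 0)] [MeasurableAdd (h.ball 0)] {P : Measure (h.ball 0)}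
  [P.IsAddLeftInvariant]

theorem measurableSet_intBall (hψ : HasTrivialConductor h ψ)
    (hfin : Finite (h.ball 0 ⧸ h.intBall 1)) {a b : F} (h6a0 : 6 * a ≠ 0)
    (hg : Measurable fun x : h.ball 0 => cubicPhase ψ a b x) {j : ℤ} (hj0 : 0 ≤ j)
    (hj : j ≤ -v (6 * a)) : MeasurableSet (h.intBall j : Set (h.ball 0)) := by
  obtain ⟨ϖ, hϖ0, hϖ⟩ := hψ.exists_uniformizer
  obtain ⟨R, hR, hRx⟩ := hψ.exists_finite_representatives hfin j.toNat
  rw [Int.toNat_of_nonneg hj0] at hRx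
  set t : F := ϖ ^ (-v (6 * a) - j) with ht
  have ht0 : t ≠ 0 := zpow_ne_zero _ hϖ0
  have hvt : v t = -v (6 * a) - j := by rw [ht, h.map_zpow hϖ0, hϖ, mul_one]
  have hat0 : 6 * a * t ≠ 0 := mul_ne_zero h6a0 ht0
  have hvat : v (6 * a * t) = -j := by rw [h.map_mul _ _ h6a0 ht0, hvt]; ring
  have htr : ∀ r : h.ball 0, t * (r : F) ∈ h.ball 0 := fun r =>
    h.mul_mem_ball (h.self_mem_ball t) r.2 (by omega)
  have e : (h.intBall j : Set (h.ball 0)) =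
      ⋂ r ∈ R, {x : h.ball 0 | ψ (6 * a * (⟨_, htr r⟩ : h.ball 0) * x) = 1} := by
    ext x
    simp only [SetLike.mem_coe, Set.mem_iInter, Set.mem_ofPred_eq, h.mem_intBall]
    constructor
    · intro hx r _
      refine hψ.map_eq_one _ ?_
      rw [← mul_assoc, mul_assoc]
      exact h.mul_mem_ball (h.self_mem_ball _) (h.mul_mem_ball r.2 hx le_rfl) (by omega)
    · intro hx
      by_contra hxj
      have hc : 6 * a * t * x ∉ h.ball (-0) := by
        rw [h.mul_mem_ball_iff hat0, hvat]
        simpa using hxj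
      obtain ⟨y, hy, hne⟩ := hψ.exists_mul_ne_one hc
      obtain ⟨r, hr, hyr⟩ := hRx y hy
      refine hne ?_
      have e : 6 * a * t * x * y = 6 * a * (t * r) * x + 6 * a * t * ((y - r) * x) := by ring
      rw [e, AddChar.map_add_eq_mul, hx r hr, one_mul]
      refine hψ.map_eq_one _ ?_
      exact h.mul_mem_ball (h.self_mem_ball _) (h.mul_mem_ball hyr x.2 le_rfl) (by omega)
  rw [e]
  exact hR.measurableSet_biInter fun r _ =>
    measurable_mul_of_measurable_cubicPhase hg _ (measurableSet_singleton 1)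

theorem coset_integral_cubicPhase_eq_zero (hψ : HasTrivialConductor h ψ) {a b : F} {l : ℤ}
    (hl : 0 ≤ l) (hK : MeasurableSet (h.intBall l : Set (h.ball 0))) {x : h.ball 0}
    (h2 : ∀ y ∈ h.ball l, 3 * a * (x * (y * y)) ∈ h.ball 0)
    (h3 : ∀ y ∈ h.ball l, a * (y * (y * y)) ∈ h.ball 0)
    (hD : 3 * a * (x : F) ^ 2 + b ∉ h.ball (-l)) :
    ∫ y in (h.intBall l : Set (h.ball 0)), cubicPhase ψ a b (x + y : h.ball 0) ∂P = 0 := by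
  obtain ⟨y, hy, hne⟩ := hψ.exists_mul_ne_one hD
  rw [← integral_indicator hK]
  refine integral_eq_zero_of_translate_eq_mul (y := ⟨y, h.ball_anti hl hy⟩) hne fun z => ?_
  have hyK : (⟨y, h.ball_anti hl hy⟩ : h.ball 0) ∈ h.intBall l := h.mem_intBall.2 hy
  by_cases hz : z ∈ h.intBall l
  · rw [Set.indicator_of_mem (show _ ∈ (h.intBall l : Set (h.ball 0)) from add_mem hyK hz),
      Set.indicator_of_mem (show _ ∈ (h.intBall l : Set (h.ball 0)) from hz)]
    have hz' := h.mem_intBall.1 hz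
    have hyz := add_mem hy hz'
    simp only [AddSubgroup.coe_add]
    rw [hψ.cubicPhase_add (h2 _ hyz) (h3 _ hyz), hψ.cubicPhase_add (h2 _ hz') (h3 _ hz'),
      mul_add _ y, AddChar.map_add_eq_mul]
    ring
  · rw [Set.indicator_of_notMem (show z ∉ (h.intBall l : Set (h.ball 0)) from hz),
      Set.indicator_of_notMem, mul_zero]
    exact fun hyz => hz ((AddSubgroup.add_mem_cancel_left _ hyK).1 hyz)

theorem norm_integral_cubicPhase_le_criticalSet (hψ : HasTrivialConductor h ψ)
    [IsProbabilityMeasure P] {a b : F} (h3 : (3 : F) ≠ 0) (ha0 : a ≠ 0) (hb0 : b ≠ 0)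
    (hv3 : 0 ≤ v 3) (ha : v a < 0) (hba : 3 * v b < v a)
    {k : ℤ} (hk : -v a - v b ≤ 4 * k)
    (hg1 : ∀ x : h.ball 0, ‖cubicPhase ψ a b x‖ = 1)
    (hg : Measurable fun x : h.ball 0 => cubicPhase ψ a b x)
    (hfin : ∀ n : ℤ, Finite (h.ball 0 ⧸ h.intBall n)) (hkJ : k ≤ -v a - v 3)
    (hmeas : ∀ j : ℤ, 0 ≤ j → j ≤ -v a - v 3 → MeasurableSet (h.intBall j : Set (h.ball 0))) :
    ‖∫ x : h.ball 0, cubicPhase ψ a b x ∂P‖ ≤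
      P.real (h.criticalSet a b (-v a - 2 * k - v 3) k) := by
  set R := -v a - 2 * k - v 3 with hR
  have h3a0 : 3 * a ≠ 0 := mul_ne_zero h3 ha0
  have hv3a : v (3 * a) = v 3 + v a := h.map_mul _ _ h3 ha0
  have h3k : -v a < 3 * k := by omega
  have hintegrable : Integrable (fun x : h.ball 0 => cubicPhase ψ a b x) P :=
    Integrable.of_bound hg.aestronglyMeasurable 1 (.of_forall fun x => (hg1 x).le)
  have hcub : ∀ l : ℤ, k ≤ l → ∀ y ∈ h.ball l, a * (y * (y * y)) ∈ h.ball 0 := fun l hl y hy =>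
    h.mul_mem_ball (h.self_mem_ball a)
      (h.mul_mem_ball hy (h.mul_mem_ball hy hy le_rfl) le_rfl) (by omega)
  have hquad : ∀ s l : ℤ, 0 ≤ v 3 + v a + s + 2 * l → ∀ x ∈ h.ball s, ∀ y ∈ h.ball l,
      3 * a * (x * (y * y)) ∈ h.ball 0 := fun s l hsl x hx y hy =>
    h.mul_mem_ball (h.self_mem_ball _)
      (h.mul_mem_ball hx (h.mul_mem_ball hy hy le_rfl) le_rfl) (by omega)
  have hshell : ∀ s : ℤ, 0 ≤ s → s < R →
      ∫ x in (h.intBall s : Set (h.ball 0)) \ h.intBall (s + 1), cubicPhase ψ a b x ∂P = 0 := by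
    intro s hs hsR
    obtain ⟨l, hl1, hl2⟩ : ∃ l : ℤ, -v a - s - v 3 ≤ 2 * l ∧ 2 * l ≤ -v a - s - v 3 + 1 :=
      ⟨(-v a - s - v 3 + 1) / 2, by omega, by omega⟩
    have hlk : k ≤ l := by omega
    have hsl : s + 1 ≤ l := by omega
    have hKl := hmeas l (by omega) (by omega)
    have := hfin l
    refine setIntegral_eq_zero_of_coset_integral hKl hintegrable ?_ ?_
    · rintro x ⟨hx, hx'⟩ y hy
      have hy1 : y ∈ h.intBall (s + 1) := h.ball_anti hsl hy
      have hy0 : y ∈ h.intBall s := h.ball_anti (by omega) hy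
      exact ⟨add_mem hx hy0, fun hxy => hx' ((AddSubgroup.add_mem_cancel_right _ hy1).1 hxy)⟩
    · rintro x ⟨hx, hx'⟩
      have hx1 : (x : F) ∉ h.ball (s + 1) := hx'
      have hx0 : (x : F) ≠ 0 := fun h0 => hx1 (Or.inl h0)
      have hxs : (x : F) ∈ h.ball s := hx
      refine hψ.coset_integral_cubicPhase_eq_zero (by omega) hKl (hquad s l (by omega) x hxs)
        (hcub l hlk) fun hD => ?_
      rw [h.mem_ball_iff hx0] at hx1 hxs
      have hb : b ∈ h.ball (v 3 + v a + 2 * s + 1) := (h.mem_ball_iff hb0).2 (by omega)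
      have hsub := sub_mem (h.ball_anti (show v 3 + v a + 2 * s + 1 ≤ -l by omega) hD) hb
      rw [add_sub_cancel_right, h.mul_mem_ball_iff h3a0, h.sq_mem_ball hx0] at hsub
      omega
  have hred : ∀ n : ℕ, (n : ℤ) ≤ max R 0 →
      ∫ x : h.ball 0, cubicPhase ψ a b x ∂P =
        ∫ x in (h.intBall n : Set (h.ball 0)), cubicPhase ψ a b x ∂P := by
    intro n
    induction n with
    | zero =>
      intro _
      have : (h.intBall (0 : ℕ) : Set (h.ball 0)) = Set.univ :=
        Set.eq_univ_of_forall fun x => h.mem_intBall.2 x.2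
      rw [this, setIntegral_univ]
    | succ n ih =>
      intro hn
      push_cast at hn ⊢
      rw [ih (by omega), ← integral_inter_add_sdiff (hmeas (n + 1) (by omega) (by omega))
        hintegrable.integrableOn, hshell n (by omega) (by omega), add_zero, Set.inter_eq_right.2]
      exact fun x hx => h.ball_anti (show (n : ℤ) ≤ n + 1 by omega) hx
  have hS : ∀ x ∈ h.criticalSet a b R k, ∀ y ∈ h.intBall k, x + y ∈ h.criticalSet a b R k := by
    rintro x ⟨hx, hxD⟩ y hy
    have hyk : (y : F) ∈ h.ball k := hy
    have hyR : (y : F) ∈ h.ball R := h.ball_anti (by omega) hyk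
    refine ⟨add_mem hx hyR, ?_⟩
    have e : 3 * a * ((x + y : h.ball 0) : F) ^ 2 + b =
        (3 * a * (x : F) ^ 2 + b) + 3 * a * ((x + (x + y)) * y) := by
      simp only [AddSubgroup.coe_add]; ring
    rw [e]
    exact add_mem hxD (h.mul_mem_ball (h.self_mem_ball _)
      (h.mul_mem_ball (add_mem hx (add_mem hx hyR)) hyk le_rfl) (by omega))
  have hKk := hmeas k (by omega) hkJ
  have := hfin k
  have hSm := AddSubgroup.measurableSet_of_add_mem hKk hS
  have hrest : ∫ x in (h.intBall R.toNat : Set (h.ball 0)) \ h.criticalSet a b R k,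
      cubicPhase ψ a b x ∂P = 0 := by
    refine setIntegral_eq_zero_of_coset_integral hKk hintegrable ?_ ?_
    · rintro x ⟨hx, hx'⟩ y hy
      have hyR : y ∈ h.intBall R.toNat := h.ball_anti (by omega) hy
      refine ⟨add_mem hx hyR, fun hxy => hx' ?_⟩
      simpa using hS _ hxy _ (neg_mem hy)
    · rintro x ⟨hx, hx'⟩
      have hxR : (x : F) ∈ h.ball R := h.ball_anti (by omega) hx
      exact hψ.coset_integral_cubicPhase_eq_zero (by omega) hKk (hquad R k (by omega) x hxR)
        (hcub k le_rfl) fun hD => hx' ⟨hxR, hD⟩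
  rw [hred R.toNat (by omega), ← integral_inter_add_sdiff hSm hintegrable.integrableOn, hrest, add_zero]
  refine (norm_setIntegral_le_of_norm_le_const (C := 1) (measure_lt_top _ _)
    fun x _ => (hg1 x).le).trans ?_
  rw [one_mul]
  exact measureReal_mono Set.inter_subset_right

end Measure

end HasTrivialConductor

namespace IsIntValuation

variable {F : Type*} [Field F] {v : F → ℤ} {h : IsIntValuation v}

theorem criticalSet_subset_ball {a b : F} (h3 : (3 : F) ≠ 0) (ha0 : a ≠ 0) {R k j : ℤ}
    (hb : b ∈ h.ball (-k)) (hj : 2 * j ≤ -k - v 3 - v a + 1) :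
    h.criticalSet a b R k ⊆ {x : h.ball 0 | (x : F) - 0 ∈ h.ball j} := by
  rintro x ⟨-, hD⟩
  rw [Set.mem_ofPred_eq, sub_zero]
  by_cases hx0 : (x : F) = 0
  · exact Or.inl hx0
  have hsub := sub_mem hD hb
  rw [add_sub_cancel_right, h.mul_mem_ball_iff (mul_ne_zero h3 ha0), h.sq_mem_ball hx0,
    h.map_mul _ _ h3 ha0] at hsub
  exact (h.mem_ball_iff hx0).2 (by omega)

theorem two_mul_map_of_mem_criticalSet {a b : F} (h3 : (3 : F) ≠ 0) (ha0 : a ≠ 0) (hb0 : b ≠ 0)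
    {R k : ℤ} (hbk : v b < -k) {x : h.ball 0} (hx : x ∈ h.criticalSet a b R k) :
    (x : F) ≠ 0 ∧ 2 * v (x : F) = v b - v 3 - v a := by
  have h3a0 : 3 * a ≠ 0 := mul_ne_zero h3 ha0
  have hv3a : v (3 * a) = v 3 + v a := h.map_mul _ _ h3 ha0
  have hbn : b ∉ h.ball (v b + 1) := by rw [h.mem_ball_iff hb0]; omega
  have hD := h.ball_anti (show v b + 1 ≤ -k by omega) hx.2
  have hx0 : (x : F) ≠ 0 := by
    intro h0
    rw [h0] at hD
    simp only [ne_eq, OfNat.ofNat_ne_zero, not_false_eq_true, zero_pow, mul_zero, zero_add] at hD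
    exact hbn hD
  refine ⟨hx0, ?_⟩
  have h1 := sub_mem (h.ball_anti (show v b ≤ v b + 1 by omega) hD) (h.self_mem_ball b)
  rw [add_sub_cancel_right, h.mul_mem_ball_iff h3a0, h.sq_mem_ball hx0] at h1
  have h2 : 3 * a * (x : F) ^ 2 ∉ h.ball (v b + 1) := fun hmem => hbn <| by
    simpa using sub_mem hD hmem
  rw [h.mul_mem_ball_iff h3a0, h.sq_mem_ball hx0] at h2
  omega

theorem criticalSet_subset_union {a b : F} (h2 : (2 : F) ≠ 0) (hv2 : v 2 = 0) (h3 : (3 : F) ≠ 0)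
    (ha0 : a ≠ 0) (hb0 : b ≠ 0) {R k : ℤ} (hbk : v b < -k) {x₀ : h.ball 0}
    (hx₀ : x₀ ∈ h.criticalSet a b R k) :
    h.criticalSet a b R k ⊆
      {x : h.ball 0 | (x : F) - x₀ ∈ h.ball (-k - v 3 - v a - v (x₀ : F))} ∪
      {x : h.ball 0 | (x : F) - -x₀ ∈ h.ball (-k - v 3 - v a - v (x₀ : F))} := by
  intro x hx
  have h3a0 : 3 * a ≠ 0 := mul_ne_zero h3 ha0
  have hv3a : v (3 * a) = v 3 + v a := h.map_mul _ _ h3 ha0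
  obtain ⟨hx₀0, -⟩ := two_mul_map_of_mem_criticalSet h3 ha0 hb0 hbk hx₀
  have hprod : 3 * a * (((x : F) - x₀) * (x - -x₀)) ∈ h.ball (-k) := by
    have e : 3 * a * (((x : F) - x₀) * (x - -x₀)) =
        (3 * a * (x : F) ^ 2 + b) - (3 * a * (x₀ : F) ^ 2 + b) := by ring
    rw [e]
    exact sub_mem hx.2 hx₀.2
  by_cases hm : (x : F) - x₀ = 0
  · exact Or.inl (Or.inl hm)
  by_cases hp : (x : F) - -x₀ = 0
  · exact Or.inr (Or.inl hp)
  rw [h.mul_mem_ball_iff h3a0, h.mem_ball_iff (mul_ne_zero hm hp), h.map_mul _ _ hm hp] at hprod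
  have hmin : v ((x : F) - x₀) ≤ v (x₀ : F) ∨ v ((x : F) - -x₀) ≤ v (x₀ : F) := by
    by_contra! hlt
    have hmem : 2 * (x₀ : F) ∈ h.ball (v (x₀ : F) + 1) := by
      have e : 2 * (x₀ : F) = (x - -x₀) - (x - x₀) := by ring
      rw [e]
      exact sub_mem ((h.mem_ball_iff hp).2 hlt.2) ((h.mem_ball_iff hm).2 hlt.1)
    rw [h.mul_mem_ball_iff h2, h.mem_ball_iff hx₀0] at hmem
    omega
  rcases hmin with hle | hle
  · exact Or.inr ((h.mem_ball_iff hp).2 (by omega))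
  · exact Or.inl ((h.mem_ball_iff hm).2 (by omega))

theorem measureReal_criticalSet_le [MeasurableSpace (h.ball 0)] {P : Measure (h.ball 0)}
    [IsProbabilityMeasure P] {q : ℝ} (hq : 1 < q)
    (hP : ∀ (x : F) (n : ℤ), P.real {y : h.ball 0 | (y : F) - x ∈ h.ball n} ≤ q ^ (-n))
    {a b : F} (h2 : (2 : F) ≠ 0) (hv2 : v 2 = 0) (h3 : (3 : F) ≠ 0) (hv3 : 0 ≤ v 3)
    (ha0 : a ≠ 0) (hb0 : b ≠ 0) {R k : ℤ} (hk : 4 * k ≤ -v a - v b + 3) :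
    P.real (h.criticalSet a b R k) ≤ 2 * q ^ ((2 : ℝ) + v 3 + (v a + v b) / 4) := by
  have hq0 : 0 < q := by linarith
  have hpow : ∀ n : ℤ, -4 * n ≤ 8 + 4 * v 3 + v a + v b →
      q ^ (-n) ≤ q ^ ((2 : ℝ) + v 3 + (v a + v b) / 4) := by
    intro n hn
    rw [← Real.rpow_intCast]
    refine Real.rpow_le_rpow_of_exponent_le hq.le ?_
    have : (-4 * n : ℝ) ≤ 8 + 4 * v 3 + v a + v b := by exact_mod_cast hn
    push_cast
    linarith
  have hpos : 0 < q ^ ((2 : ℝ) + v 3 + (v a + v b) / 4) := Real.rpow_pos_of_pos hq0 _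
  by_cases hbk : v b < -k
  · rcases (h.criticalSet a b R k).eq_empty_or_nonempty with he | ⟨x₀, hx₀⟩
    · rw [he, measureReal_empty]; positivity
    obtain ⟨-, hv⟩ := two_mul_map_of_mem_criticalSet h3 ha0 hb0 hbk hx₀
    have hn := hpow (-k - v 3 - v a - v (x₀ : F)) (by omega)
    calc _ ≤ _ := measureReal_mono (criticalSet_subset_union h2 hv2 h3 ha0 hb0 hbk hx₀)
      _ ≤ _ := measureReal_union_le _ _
      _ ≤ _ := add_le_add ((hP _ _).trans hn) ((hP _ _).trans hn)
      _ = _ := (two_mul _).symm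
  · have hb : b ∈ h.ball (-k) := (h.mem_ball_iff hb0).2 (by omega)
    calc _ ≤ _ := measureReal_mono (criticalSet_subset_ball h3 ha0 hb
            (j := (-k - v 3 - v a + 1) / 2) (by omega))
      _ ≤ _ := hP _ _
      _ ≤ _ := hpow _ (by omega)
      _ ≤ _ := by linarith

end IsIntValuation

namespace HasTrivialConductor

variable {F : Type*} [Field F] {v : F → ℤ} {h : IsIntValuation v} {ψ : AddChar F ℂ}
  [MeasurableSpace (h.ball 0)] [MeasurableAdd (h.ball 0)] {P : Measure (h.ball 0)}
  [P.IsAddLeftInvariant]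

theorem norm_integral_cubicPhase_le (hψ : HasTrivialConductor h ψ) [IsProbabilityMeasure P]
    {q : ℝ} (hq : 1 < q)
    (hP : ∀ (x : F) (n : ℤ), P.real {y : h.ball 0 | (y : F) - x ∈ h.ball n} ≤ q ^ (-n))
    {a b : F} (h2 : (2 : F) ≠ 0) (hv2 : v 2 = 0) (h3 : (3 : F) ≠ 0) (ha0 : a ≠ 0) (hb0 : b ≠ 0)
    (ha : v a < 0) (hab : v a ≤ v b) (hba : 3 * v b < v a)
    (hg : Measurable fun x : h.ball 0 => cubicPhase ψ a b x) :
    ‖∫ x : h.ball 0, cubicPhase ψ a b x ∂P‖ ≤ 2 * q ^ ((2 : ℝ) + v 3 + (v a + v b) / 4) := by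
  have hq0 : 0 < q := by linarith
  have hv3 : 0 ≤ v 3 := by
    have e : (1 : F) + 2 = 3 := by norm_num
    have := h.map_add 1 2 one_ne_zero h2 (by rwa [e])
    rwa [e, h.map_one, hv2, min_self] at this
  have h6 : (6 : F) ≠ 0 := by
    rw [show (6 : F) = 2 * 3 by norm_num]
    exact mul_ne_zero h2 h3
  have h6a0 : 6 * a ≠ 0 := mul_ne_zero h6 ha0
  have hv6a : v (6 * a) = v 3 + v a := by
    rw [show (6 : F) * a = 2 * (3 * a) by ring, h.map_mul _ _ h2 (mul_ne_zero h3 ha0),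
      h.map_mul _ _ h3 ha0, hv2, zero_add]
  have hg1 : ∀ x : h.ball 0, ‖cubicPhase ψ a b x‖ = 1 := fun x => by
    refine norm_eq_one_of_measurable_cubicPhase (P := P) ha0 hg (add_mem ?_ ?_)
    · rw [pow_three]
      exact h.mul_mem_ball (h.self_mem_ball a)
        (h.mul_mem_ball x.2 (h.mul_mem_ball x.2 x.2 le_rfl) le_rfl) (by omega)
    · exact h.mul_mem_ball (h.self_mem_ball b) x.2 (by omega)
  obtain ⟨k, hk1, hk2⟩ : ∃ k : ℤ, -v a - v b ≤ 4 * k ∧ 4 * k ≤ -v a - v b + 3 :=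
    ⟨(-v a - v b + 3) / 4, by omega, by omega⟩
  by_cases hkJ : k ≤ -v a - v 3
  · rcases finite_or_infinite (h.ball 0 ⧸ h.intBall 1) with hfin | hinf
    · refine (hψ.norm_integral_cubicPhase_le_criticalSet h3 ha0 hb0 hv3 ha hba hk1 hg1 hg
        (hψ.finite_quotient_intBall hfin) hkJ fun j hj0 hj =>
          hψ.measurableSet_intBall hfin h6a0 hg hj0 (by omega)).trans
        (IsIntValuation.measureReal_criticalSet_le hq hP h2 hv2 h3 hv3 ha0 hb0 hk2)
    · rw [hψ.integral_cubicPhase_eq_zero_of_infinite h6 ha0 (by omega) hinf hg hg1, norm_zero]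
      positivity
  · have h1 : ‖∫ x : h.ball 0, cubicPhase ψ a b x ∂P‖ ≤ 1 := by
      simpa using norm_integral_le_of_norm_le_const (μ := P) (.of_forall fun x => (hg1 x).le)
    have h4 : (0 : ℝ) ≤ 8 + 4 * v 3 + v a + v b := by
      have : 0 ≤ 8 + 4 * v 3 + v a + v b := by omega
      exact_mod_cast this
    have h5 : 1 ≤ q ^ ((2 : ℝ) + v 3 + (v a + v b) / 4) :=
      Real.one_le_rpow hq.le (by linarith)
    linarith

end HasTrivialConductor

/-- Part (2) of the Proposition on the p-adic Airy function
`Ai(a;b) := q^{-v(a)/3} ∫_{t ∈ O} ψ(a t³ + b t) dt` (with `v(a) < 0`): if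
`v(a) ≤ v(b) < (1/3) v(a)`, then `|Ai(a;b)| ≤ 2 q^{2 + v(3)} q^{-v(a)/12 + v(b)/4}`. -/
theorem stmt_7 {F : Type*} [Field F] [CharZero F] [MeasurableSpace F]
    (μ : Measure F) (v : F → ℤ) (q : ℝ) (ψ : F → ℂ)
    (hq : 1 < q)
    (hv_mul : ∀ x y : F, x ≠ 0 → y ≠ 0 → v (x * y) = v x + v y)
    (hv_add : ∀ x y : F, x ≠ 0 → y ≠ 0 → x + y ≠ 0 → min (v x) (v y) ≤ v (x + y))
    (hodd : v 2 = 0)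
    (hμ : ∀ n : ℤ, μ {x : F | x = 0 ∨ n ≤ v x} = ENNReal.ofReal (q ^ (-n)))
    (hμ_inv : ∀ (a : F) (s : Set F), μ ((a + ·) ⁻¹' s) = μ s)
    (hψ_add : ∀ x y : F, ψ (x + y) = ψ x * ψ y)
    (hψ_triv : ∀ x : F, (x = 0 ∨ 0 ≤ v x) → ψ x = 1)
    (hψ_nontriv : ∃ x : F, x ≠ 0 ∧ v x = -1 ∧ ψ x ≠ 1)
    (a b : F) (ha0 : a ≠ 0) (hb0 : b ≠ 0) (ha : v a < 0)
    (hab : v a ≤ v b) (hba : 3 * v b < v a) :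
    ‖((Real.rpow q (-(v a : ℝ) / 3) : ℝ) : ℂ) *
        ∫ t in {t : F | t = 0 ∨ 0 ≤ v t}, ψ (a * t ^ 3 + b * t) ∂μ‖
      ≤ 2 * Real.rpow q (2 + (v 3 : ℝ)) *
          Real.rpow q (-(v a : ℝ) / 12 + (v b : ℝ) / 4) := by
  have hq0 : 0 < q := by linarith
  have h : IsIntValuation v := ⟨hv_mul, hv_add⟩
  let χ : AddChar F ℂ := ⟨ψ, hψ_triv 0 (Or.inl rfl), hψ_add⟩
  have hχ : HasTrivialConductor h χ := ⟨hψ_triv, hψ_nontriv⟩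
  suffices key : ‖∫ t in {t : F | t = 0 ∨ 0 ≤ v t}, cubicPhase χ a b t ∂μ‖ ≤
      2 * q ^ ((2 : ℝ) + v 3 + (v a + v b) / 4) by
    have hpow : Real.rpow q (-(v a : ℝ) / 3) * (2 * q ^ ((2 : ℝ) + v 3 + (v a + v b) / 4)) =
        2 * Real.rpow q (2 + (v 3 : ℝ)) * Real.rpow q (-(v a : ℝ) / 12 + (v b : ℝ) / 4) := by
      simp only [Real.rpow_eq_pow]
      rw [mul_left_comm, mul_assoc, ← Real.rpow_add hq0, ← Real.rpow_add hq0]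
      ring_nf
    have hnn : 0 ≤ Real.rpow q (-(v a : ℝ) / 3) := Real.rpow_nonneg hq0.le _
    rw [norm_mul, Complex.norm_real, Real.norm_of_nonneg hnn, ← hpow]
    exact mul_le_mul_of_nonneg_left key hnn
  by_cases hintegrable : AEStronglyMeasurable (cubicPhase χ a b) (μ.restrict (h.ball 0 : Set F))
  swap
  · have h0 : ∫ t in {t : F | t = 0 ∨ 0 ≤ v t}, cubicPhase χ a b t ∂μ = 0 :=
      integral_undef fun hi => hintegrable hi.aestronglyMeasurable
    rw [h0, norm_zero]
    positivity
  obtain ⟨m, P, hadd, hinv, hcompl, hPμ, hval, hmap⟩ :=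
    exists_invariant_measure_addSubgroup μ hμ_inv (h.ball 0)
  have hball : ∀ n : ℤ, μ (h.ball n : Set F) = ENNReal.ofReal (q ^ (-n)) := hμ
  have hprob : IsProbabilityMeasure P := ⟨by
    rw [← Set.preimage_univ (f := (Subtype.val : h.ball 0 → F)),
      ← Measure.map_apply hval MeasurableSet.univ, hmap, Measure.restrict_apply_univ, hball]
    simp⟩
  have hP : ∀ (x : F) (n : ℤ), P.real {y : h.ball 0 | (y : F) - x ∈ h.ball n} ≤ q ^ (-n) := by
    intro x n
    refine ENNReal.toReal_le_of_le_ofReal (by positivity) ((hPμ _).trans ?_)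
    rw [← hball, ← hμ_inv (-x) (h.ball n)]
    refine measure_mono ?_
    rintro _ ⟨y, hy, rfl⟩
    rw [Set.mem_preimage, neg_add_eq_sub]
    exact hy
  rw [← hmap] at hintegrable
  have hg : Measurable fun x : h.ball 0 => cubicPhase χ a b x :=
    aemeasurable_iff_measurable.1 (hintegrable.comp_measurable hval).aemeasurable
  have hI : ∫ t in {t : F | t = 0 ∨ 0 ≤ v t}, cubicPhase χ a b t ∂μ =
      ∫ x : h.ball 0, cubicPhase χ a b x ∂P := by
    rw [← integral_map hval.aemeasurable hintegrable, hmap]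
    rfl
  rw [hI]
  exact hχ.norm_integral_cubicPhase_le hq hP two_ne_zero hodd three_ne_zero ha0 hb0 ha hab hba hg
end
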